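/- Let a, b, c be rational numbers with a·b·c ≠ 0, let (w,x,y,z) = Ĝ(1,a,b,c) and (w₂,x₂,y₂,z₂) = Ĝ(w,x,y,z), where Ĝ(w,x,y,z) = (w³+2x³+y³, w²x+2x²y+y²z, wx²+2xy²+yz², x³+2y³+z³). Suppose condition R(a,b,c) holds, condition T(w,x,y,z) holds, and condition T(w₂,x₂,y₂,z₂) holds. Then (a,b,c) = (−1, 1, 1), or (a,b,c) = (1, −1, 1), or (b = −a and c = −1). -/

import Mathlib

/-- Condition R: the gadget `G₁` fails to work on `[1,a,b,c]`. -/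
def condR (a b c : ℚ) : Prop :=
  c + 1 = 0 ∨
  a * b + c ^ 2 + c + 1 = 0 ∨
  2 * a * b + c ^ 2 + 1 = 0 ∨
  3 * a * b + c ^ 2 - c + 1 = 0 ∨
  4 * a * b + c ^ 2 - 2 * c + 1 = 0

/-- Condition S: the normalized signature `[w,x,y,z]` is degenerate,
generalized equality, or affine. -/
def condS (w x y z : ℚ) : Prop :=
  (x ^ 2 = w * y ∧ y ^ 2 = x * z) ∨
  (x = 0 ∧ y = 0) ∨
  (w = y ∧ x = 0 ∧ z = 0) ∨
  (w + y = 0 ∧ x = 0 ∧ z = 0) ∨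
  (w = x ∧ w + y = 0 ∧ w + z = 0) ∨
  (w + x = 0 ∧ w + y = 0 ∧ w = z)

/-- Condition T: the gadget `G₁` fails to work on the normalized signature `[w,x,y,z]`. -/
def condT (w x y z : ℚ) : Prop :=
  z * w + w ^ 2 = 0 ∨
  x * y + z ^ 2 + z * w + w ^ 2 = 0 ∨
  2 * x * y + z ^ 2 + w ^ 2 = 0 ∨
  3 * x * y + z ^ 2 - z * w + w ^ 2 = 0 ∨
  4 * x * y + z ^ 2 - 2 * z * w + w ^ 2 = 0 ∨
  x * y = w * z

/-- The signature produced by the auxiliary gadget `G_aux` from `[w,x,y,z]`. -/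
def Ghat (p : ℚ × ℚ × ℚ × ℚ) : ℚ × ℚ × ℚ × ℚ :=
  (p.1 ^ 3 + 2 * p.2.1 ^ 3 + p.2.2.1 ^ 3,
   p.1 ^ 2 * p.2.1 + 2 * p.2.1 ^ 2 * p.2.2.1 + p.2.2.1 ^ 2 * p.2.2.2,
   p.1 * p.2.1 ^ 2 + 2 * p.2.1 * p.2.2.1 ^ 2 + p.2.2.1 * p.2.2.2 ^ 2,
   p.2.1 ^ 3 + 2 * p.2.2.1 ^ 3 + p.2.2.2 ^ 3)


set_option linter.unusedSectionVars false
set_option linter.unusedVariables false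

section Local

variable {R F : Type*} [CommRing R] [Field F]

/-- The map of the auxiliary gadget in the rotated coordinates (up to the factor 16). -/
def gp {A : Type*} [CommRing A] (p q r _s : A) : A := p^3+3*p*r^2+6*p*q^2+6*q^2*r
def gq {A : Type*} [CommRing A] (p q r s : A) : A :=
  5*q*r^2+2*q^2*s+2*q^3+2*p*r*s+4*p*q*r+p^2*q
def gr {A : Type*} [CommRing A] (p q r s : A) : A :=
  2*r^3+6*q*r*s+4*q^2*r+p*s^2+2*p*r^2+p*q^2
def gs {A : Type*} [CommRing A] (_p q r s : A) : A := 6*r^2*s+3*q*s^2+6*q*r^2+q^3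

def al (j : ℕ) : ℕ := if j = 6 then 0 else 1
def be (j : ℕ) : ℕ := if j = 6 then 1 else j - 1

/-- the conditions in the rotated coordinates -/
def fe {A : Type*} [CommRing A] (j : ℕ) (p q r s : A) : A :=
  if j = 0 then p+3*q+3*r+s
  else (al j : A) * (p+3*r)^2 + 2*(be j : A)*(q*s+q^2-r^2-p*r)
def fe1 {A : Type*} [CommRing A] (j : ℕ) (p q r s : A) : A :=
  fe j (gp p q r s) (gq p q r s) (gr p q r s) (gs p q r s)
def fe2 {A : Type*} [CommRing A] (j : ℕ) (p q r s : A) : A :=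
  fe1 j (gp p q r s) (gq p q r s) (gr p q r s) (gs p q r s)

/-- weighted versions -/
def hp {A : Type*} [CommRing A] (ρ p q r _s : A) : A := 3*p*r^2+6*q^2*r+ρ^2*(6*p*q^2)+ρ^4*p^3
def hq {A : Type*} [CommRing A] (ρ p q r s : A) : A :=
  5*q*r^2+2*q^2*s+2*p*r*s+ρ^2*(2*q^3+4*p*q*r)+ρ^4*(p^2*q)
def hr {A : Type*} [CommRing A] (ρ p q r s : A) : A :=
  2*r^3+6*q*r*s+p*s^2+ρ^2*(4*q^2*r+2*p*r^2)+ρ^4*(p*q^2)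
def hs {A : Type*} [CommRing A] (ρ _p q r s : A) : A :=
  6*r^2*s+3*q*s^2+ρ^2*(6*q*r^2)+ρ^4*q^3
def he {A : Type*} [CommRing A] (j : ℕ) (ρ p q r s : A) : A :=
  if j = 0 then ρ^3*p+3*ρ^2*q+3*ρ*r+s
  else (al j : A) * (ρ^2*p+3*r)^2 + 2*(be j : A)*(q*s+ρ^2*q^2-r^2-ρ^2*p*r)
def he1 {A : Type*} [CommRing A] (j : ℕ) (ρ p q r s : A) : A :=
  he j ρ (hp ρ p q r s) (hq ρ p q r s) (hr ρ p q r s) (hs ρ p q r s)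
def he2 {A : Type*} [CommRing A] (j : ℕ) (ρ p q r s : A) : A :=
  he1 j ρ (hp ρ p q r s) (hq ρ p q r s) (hr ρ p q r s) (hs ρ p q r s)

theorem fe_smul (j : ℕ) (l p q r s : R) :
    fe j (l*p) (l*q) (l*r) (l*s) = (if j = 0 then l else l^2) * fe j p q r s := by
  unfold fe; split_ifs <;> ring

theorem fe1_smul (j : ℕ) (l p q r s : R) :
    fe1 j (l*p) (l*q) (l*r) (l*s) = (if j = 0 then l^3 else l^6) * fe1 j p q r s := by
  have h := fe_smul j (l^3) (gp p q r s) (gq p q r s) (gr p q r s) (gs p q r s)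
  have e1 : gp (l*p) (l*q) (l*r) (l*s) = l^3 * gp p q r s := by unfold gp; ring
  have e2 : gq (l*p) (l*q) (l*r) (l*s) = l^3 * gq p q r s := by unfold gq; ring
  have e3 : gr (l*p) (l*q) (l*r) (l*s) = l^3 * gr p q r s := by unfold gr; ring
  have e4 : gs (l*p) (l*q) (l*r) (l*s) = l^3 * gs p q r s := by unfold gs; ring
  unfold fe1
  rw [e1, e2, e3, e4, h]
  split_ifs <;> ring

theorem fe2_smul (j : ℕ) (l p q r s : R) :
    fe2 j (l*p) (l*q) (l*r) (l*s) = (if j = 0 then l^9 else l^18) * fe2 j p q r s := by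
  have h := fe1_smul j (l^3) (gp p q r s) (gq p q r s) (gr p q r s) (gs p q r s)
  have e1 : gp (l*p) (l*q) (l*r) (l*s) = l^3 * gp p q r s := by unfold gp; ring
  have e2 : gq (l*p) (l*q) (l*r) (l*s) = l^3 * gq p q r s := by unfold gq; ring
  have e3 : gr (l*p) (l*q) (l*r) (l*s) = l^3 * gr p q r s := by unfold gr; ring
  have e4 : gs (l*p) (l*q) (l*r) (l*s) = l^3 * gs p q r s := by unfold gs; ring
  unfold fe2
  rw [e1, e2, e3, e4, h]
  split_ifs <;> ring

variable [IsDomain R]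

theorem fe_of_smul (j : ℕ) {l p q r s : R} (hl : l ≠ 0)
    (h : fe j (l*p) (l*q) (l*r) (l*s) = 0) : fe j p q r s = 0 := by
  rw [fe_smul] at h
  rcases mul_eq_zero.1 h with h | h
  · split_ifs at h <;> simp_all
  · exact h

theorem fe1_of_smul (j : ℕ) {l p q r s : R} (hl : l ≠ 0)
    (h : fe1 j (l*p) (l*q) (l*r) (l*s) = 0) : fe1 j p q r s = 0 := by
  rw [fe1_smul] at h
  rcases mul_eq_zero.1 h with h | h
  · split_ifs at h <;> simp_all
  · exact h

theorem fe2_of_smul (j : ℕ) {l p q r s : R} (hl : l ≠ 0)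
    (h : fe2 j (l*p) (l*q) (l*r) (l*s) = 0) : fe2 j p q r s = 0 := by
  rw [fe2_smul] at h
  rcases mul_eq_zero.1 h with h | h
  · split_ifs at h <;> simp_all
  · exact h

theorem he_of_fe (j : ℕ) {ρ p q r s : R} (hρ : ρ ≠ 0)
    (h : fe j (ρ^3*p) (ρ^2*q) (ρ*r) s = 0) : he j ρ p q r s = 0 := by
  unfold fe at h; unfold he
  split_ifs at h ⊢
  · linear_combination h
  · have : ρ^2 * ((al j : R) * (ρ^2*p+3*r)^2 + 2*(be j : R)*(q*s+ρ^2*q^2-r^2-ρ^2*p*r)) = 0 := by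
      linear_combination h
    exact (mul_eq_zero.1 this).resolve_left (pow_ne_zero _ hρ)

theorem gp_w (ρ p q r s : R) : gp (ρ^3*p) (ρ^2*q) (ρ*r) s = ρ^2*(ρ^3 * hp ρ p q r s) := by
  unfold gp hp; ring
theorem gq_w (ρ p q r s : R) : gq (ρ^3*p) (ρ^2*q) (ρ*r) s = ρ^2*(ρ^2 * hq ρ p q r s) := by
  unfold gq hq; ring
theorem gr_w (ρ p q r s : R) : gr (ρ^3*p) (ρ^2*q) (ρ*r) s = ρ^2*(ρ * hr ρ p q r s) := by
  unfold gr hr; ring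
theorem gs_w (ρ p q r s : R) : gs (ρ^3*p) (ρ^2*q) (ρ*r) s = ρ^2*(hs ρ p q r s) := by
  unfold gs hs; ring

theorem he1_of_fe1 (j : ℕ) {ρ p q r s : R} (hρ : ρ ≠ 0)
    (h : fe1 j (ρ^3*p) (ρ^2*q) (ρ*r) s = 0) : he1 j ρ p q r s = 0 := by
  unfold fe1 at h
  rw [gp_w, gq_w, gr_w, gs_w] at h
  exact he_of_fe j hρ (fe_of_smul j (pow_ne_zero _ hρ) h)

theorem he2_of_fe2 (j : ℕ) {ρ p q r s : R} (hρ : ρ ≠ 0)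
    (h : fe2 j (ρ^3*p) (ρ^2*q) (ρ*r) s = 0) : he2 j ρ p q r s = 0 := by
  unfold fe2 at h
  rw [gp_w, gq_w, gr_w, gs_w] at h
  exact he1_of_fe1 j hρ (fe1_of_smul j (pow_ne_zero _ hρ) h)

theorem fe_map (φ : R →+* F) (j : ℕ) (p q r s : R) :
    φ (fe j p q r s) = fe j (φ p) (φ q) (φ r) (φ s) := by
  unfold fe; split_ifs <;> simp [map_ofNat φ]
theorem fe1_map (φ : R →+* F) (j : ℕ) (p q r s : R) :
    φ (fe1 j p q r s) = fe1 j (φ p) (φ q) (φ r) (φ s) := by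
  unfold fe1; rw [fe_map]; simp [gp, gq, gr, gs, map_ofNat φ]
theorem he_map (φ : R →+* F) (j : ℕ) (ρ p q r s : R) :
    φ (he j ρ p q r s) = he j (φ ρ) (φ p) (φ q) (φ r) (φ s) := by
  unfold he; split_ifs <;> simp [map_ofNat φ]
theorem he1_map (φ : R →+* F) (j : ℕ) (ρ p q r s : R) :
    φ (he1 j ρ p q r s) = he1 j (φ ρ) (φ p) (φ q) (φ r) (φ s) := by
  unfold he1; rw [he_map]; simp [hp, hq, hr, hs, map_ofNat φ]
theorem he2_map (φ : R →+* F) (j : ℕ) (ρ p q r s : R) :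
    φ (he2 j ρ p q r s) = he2 j (φ ρ) (φ p) (φ q) (φ r) (φ s) := by
  unfold he2; rw [he1_map]; simp [hp, hq, hr, hs, map_ofNat φ]

end Local

section Local2

variable {R F : Type*} [CommRing R] [Field F] [IsDomain R]

theorem nz_unit {φ : R →+* F} (hu : ∀ x : R, φ x ≠ 0 → IsUnit x) {x : R} (h : φ x ≠ 0) :
    ∃ u : R, x * u = 1 := (hu x h).exists_right_inv

/-- Key expansion near the point P0, when `p` is dominant. -/
theorem p0A {φ : R →+* F} (hu : ∀ x : R, φ x ≠ 0 → IsUnit x) (n : ℕ) (hn : (2 * n : F) ≠ 0)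
    {p q r m : R} (hp0 : φ p = 0) (hq0 : φ q = 0) (hr0 : φ r = 0) (hm0 : φ m = 0)
    (h : (p+3*r)^2 + 2*(n:R)*(q*1+q^2-r^2-p*r) = 0) (hm : r^3 = p*m) :
    ∃ π ξ ρ η : R, gp p q r 1 = p*π ∧ gq p q r 1 = p*ξ ∧ gr p q r 1 = p*ρ ∧
      gq p q r 1 * gs p q r 1 = p^2*η ∧ φ π = 0 ∧ φ ξ = 0 ∧ φ ρ = 1 ∧ φ η = 0 := by
  obtain ⟨u, hu'⟩ := nz_unit hu (x := 2*(n:R)*(1+q)) (by simpa [hq0, map_ofNat φ] using hn)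
  set A : R := (2*n-9)*u with hA
  set y : R := r*((2*n-6)*u) - p*u with hy
  have hy0 : φ y = 0 := by simp [hy, hr0, hp0]
  have hqe : q = r^2*A + p*y := by
    rw [hA, hy]; linear_combination (-q)*hu' + u*h
  have hqr : q*r = p*(m*A+y*r) := by linear_combination r*hqe + A*hm
  have hqq : q^2 = p*(m*r*A^2+2*r^2*A*y+p*y^2) := by
    linear_combination (q + r^2*A+p*y)*hqe + r*A^2*hm
  have hss : gs p q r 1 = r^2*(6+3*A+6*q) + p*(3*y + q*(m*r*A^2+2*r^2*A*y+p*y^2)) := by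
    unfold gs; linear_combination 3*hqe + q*hqq
  have hgq : gq p q r 1 = p * (r*(5*(m*A+y*r)+2*(1+q)*(m*A^2+2*r*A*y)+2+4*q)
      + p*(2*(1+q)*y^2+q)) := by
    unfold gq; linear_combination 5*r*hqr + 2*(1+q)*hqq
  refine ⟨p^2+3*r^2+6*q^2+6*r*(m*r*A^2+2*r^2*A*y+p*y^2),
    r*(5*(m*A+y*r)+2*(1+q)*(m*A^2+2*r*A*y)+2+4*q) + p*(2*(1+q)*y^2+q),
    1+2*m+(6+4*q)*(m*A+y*r)+2*r^2+q^2,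
    m*(5*(m*A+y*r)+2*(1+q)*(m*A^2+2*r*A*y)+2+4*q)*(6+3*A+6*q)
     + r*(5*(m*A+y*r)+2*(1+q)*(m*A^2+2*r*A*y)+2+4*q)*(3*y + q*(m*r*A^2+2*r^2*A*y+p*y^2))
     + (2*(1+q)*y^2+q)*gs p q r 1, ?_, hgq, ?_, ?_, ?_, ?_, ?_, ?_⟩
  · unfold gp; linear_combination 6*r*hqq
  · unfold gr; linear_combination (6+4*q)*hqr + 2*hm
  · rw [hgq]
    linear_combination p*r*(5*(m*A+y*r)+2*(1+q)*(m*A^2+2*r*A*y)+2+4*q)*hss +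
      p*(5*(m*A+y*r)+2*(1+q)*(m*A^2+2*r*A*y)+2+4*q)*(6+3*A+6*q)*hm
  · simp [hp0, hq0, hr0]
  · simp [hp0, hr0]
  · simp [hm0, hq0, hr0, hy0]
  · simp [hm0, hq0, hr0, hy0]

theorem fe_pos {A : Type*} [CommRing A] {j : ℕ} (hj : j ≠ 0) (p q r s : A) : fe j p q r s =
    (al j : A) * (p+3*r)^2 + 2*(be j : A)*(q*s+q^2-r^2-p*r) := by
  unfold fe; rw [if_neg hj]

theorem he_pos {A : Type*} [CommRing A] {j : ℕ} (hj : j ≠ 0) (ρ p q r s : A) : he j ρ p q r s =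
    (al j : A) * (ρ^2*p+3*r)^2 + 2*(be j : A)*(q*s+ρ^2*q^2-r^2-ρ^2*p*r) := by
  unfold he; rw [if_neg hj]

/-- the numerical hypotheses on the residue field -/
structure Good (F : Type*) [Field F] : Prop where
  n2 : (2:F) ≠ 0
  n3 : (3:F) ≠ 0
  n5 : (5:F) ≠ 0
  n7 : (7:F) ≠ 0

theorem Good.nine (hF : Good F) {j : ℕ} (hj : j ≠ 0) (hj6 : j ≤ 6) :
    (9 * (al j : F) - 2 * (be j : F)) ≠ 0 := by
  have h9 : (9:F) ≠ 0 := by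
    have := mul_ne_zero hF.n3 hF.n3; norm_num at this; exact this
  have := hF.n2; have := hF.n3; have := hF.n5; have := hF.n7
  interval_cases j <;> simp_all [al, be] <;> norm_num <;> assumption

/-- `e_k(g(0,0,c,-3c))` does not vanish. -/
theorem fe1_special (hF : Good F) {k : ℕ} (hk6 : k ≤ 6) {c : F} (hc : c ≠ 0) :
    fe1 k 0 0 c (-3*c) ≠ 0 := by
  have h2 := hF.n2
  have h3 := hF.n3
  unfold fe1
  by_cases hk : k = 0
  · subst hk
    have : fe 0 (gp 0 0 c (-3*c)) (gq 0 0 c (-3*c)) (gr 0 0 c (-3*c)) (gs 0 0 c (-3*c))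
      = -2*2*3*c^3 := by simp [fe, gp, gq, gr, gs]; ring
    rw [this]; simp [h2, h3, hc]
  · rw [fe_pos hk]
    have : (al k : F) * (gp 0 0 c (-3*c)+3*(gr 0 0 c (-3*c)))^2 + 2*(be k : F)*((gq 0 0 c (-3*c))*
      (gs 0 0 c (-3*c))+(gq 0 0 c (-3*c))^2-(gr 0 0 c (-3*c))^2-(gp 0 0 c (-3*c))*
      (gr 0 0 c (-3*c))) = 2*2*c^6*(9 * (al k : F) - 2 * (be k : F)) := by
      simp [gp, gq, gr, gs]; ring
    rw [this]
    exact mul_ne_zero (mul_ne_zero (mul_ne_zero h2 h2) (pow_ne_zero _ hc)) (hF.nine hk hk6)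

/-- if `w' = 0` and all of `V` is divisible by `p`, contradiction -/
theorem p0_w {φ : R →+* F} (hF : Good F) {k : ℕ} (hk6 : k ≤ 6) {l p q r π ξ ρ s : R} {c : F}
    (hl : l ≠ 0)
    (h1 : gp p q r s = l*π) (h2 : gq p q r s = l*ξ) (h3 : gr p q r s = l*ρ)
    (e1 : φ π = 0) (e2 : φ ξ = 0) (e3 : φ ρ = c) (hc : c ≠ 0)
    (hw : fe1 0 p q r s = 0) (hk : fe2 k p q r s = 0) : False := by
  have hs : gs p q r s = l * (-(π+3*ξ+3*ρ)) := by
    unfold fe1 fe at hw; simp only [if_true] at hw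
    linear_combination hw - h1 - 3*h2 - 3*h3
  unfold fe2 at hk
  rw [h1, h2, h3, hs] at hk
  have := congrArg φ (fe1_of_smul k hl hk)
  rw [fe1_map, map_zero] at this
  apply fe1_special hF hk6 hc
  have e5 : φ (-(π+3*ξ+3*ρ)) = -3*c := by simp [e1, e2, e3, map_ofNat φ]
  rwa [e1, e2, e3, e5] at this

theorem p0_caseA {φ : R →+* F} (hu : ∀ x : R, φ x ≠ 0 → IsUnit x) (hF : Good F)
    (n : ℕ) (hn : (2 * n : F) ≠ 0) {j k : ℕ} (hj6 : j ≤ 6) (hk6 : k ≤ 6)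
    {p q r m : R} (hp0 : φ p = 0) (hq0 : φ q = 0) (hr0 : φ r = 0) (hm0 : φ m = 0) (hp : p ≠ 0)
    (h : (p+3*r)^2 + 2*(n:R)*(q*1+q^2-r^2-p*r) = 0) (hm : r^3 = p*m)
    (hj : fe1 j p q r 1 = 0) (hk : fe2 k p q r 1 = 0) : False := by
  obtain ⟨π, ξ, ρ, η, h1, h2, h3, h4, e1, e2, e3, e4⟩ := p0A hu n hn hp0 hq0 hr0 hm0 h hm
  by_cases hj0 : j = 0
  · subst hj0
    exact p0_w hF hk6 hp h1 h2 h3 e1 e2 e3 one_ne_zero hj hk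
  · unfold fe1 at hj
    rw [fe_pos hj0] at hj
    have : p^2 * ((al j : R)*(π+3*ρ)^2 + 2*(be j : R)*(η + ξ^2-ρ^2-π*ρ)) = 0 := by
      rw [← hj, h4, h1, h2, h3]; ring
    have := congrArg φ ((mul_eq_zero.1 this).resolve_left (pow_ne_zero _ hp))
    simp [e1, e2, e3, e4, map_ofNat φ] at this
    apply hF.nine hj0 hj6
    linear_combination this
end Local2

section Local3

variable {R F : Type*} [CommRing R] [Field F] [IsDomain R]

/-- exceptional case: type 3 followed by `w'' = 0` -/
theorem p0_exc {φ : R →+* F} (hu : ∀ x : R, φ x ≠ 0 → IsUnit x) (hF : Good F)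
    {j : ℕ} (hj0 : j ≠ 0) (hj6 : j ≤ 6) {r P Q : R} (hrn : r ≠ 0) (hr0 : φ r = 0)
    (hP : φ P = 1) (hi : he 4 r P Q 1 1 = 0) (hj : he1 j r P Q 1 1 = 0)
    (hk : he2 0 r P Q 1 1 = 0) : False := by
  have n2 := hF.n2
  have n3 := hF.n3
  have hi' : 6*Q+3+6*r^2*Q^2+r^4*P^2 = 0 := by
    simp [he, al, be] at hi
    linear_combination hi
  have hQ : 2 * φ Q = -1 := by
    have := congrArg φ hi'
    simp [hr0, map_ofNat φ] at this
    apply mul_left_cancel₀ n3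
    linear_combination this
  obtain ⟨u, hu6⟩ := nz_unit hu (x := (6:R)) (by
    rw [map_ofNat φ]; have := mul_ne_zero n2 n3; norm_num at this; exact this)
  obtain ⟨p1, hp1⟩ : ∃ x, x = hp r P Q 1 1 := ⟨_, rfl⟩
  obtain ⟨q1, hq1⟩ : ∃ x, x = hq r P Q 1 1 := ⟨_, rfl⟩
  obtain ⟨r1, hr1⟩ : ∃ x, x = hr r P Q 1 1 := ⟨_, rfl⟩
  obtain ⟨s1, hs1⟩ : ∃ x, x = hs r P Q 1 1 := ⟨_, rfl⟩
  unfold he2 at hk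
  unfold he1 at hj hk
  rw [← hp1, ← hq1, ← hr1, ← hs1] at hj hk
  -- q1 = 2 r1 + r^2 y
  have hy : ∃ y, q1 = 2*r1 + r^2*y := by
    obtain ⟨z, hz⟩ : ∃ z, q1 - 2*r1 = 2*Q^2-7*Q-4+r^2*z :=
      ⟨(2*Q^3+4*P*Q*1)+r^2*(P^2*Q)-2*((4*Q^2*1+2*P*1^2)+r^2*(P*Q^2)), by
        rw [hq1, hr1]; unfold hq hr; ring⟩
    -- 2Q^2-7Q-4 = (2Q+1)(Q-4)
    refine ⟨z - 2*u*(6*Q^2+r^2*P^2)*(Q-4), ?_⟩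
    linear_combination hz + (Q-4)*2*u*hi' - (Q-4)*(2*Q+1)*hu6
  obtain ⟨y, hy⟩ := hy
  have fr1 : φ r1 = 0 := by
    rw [hr1]; simp [hr, hr0, hP, map_ofNat φ]
    linear_combination 3*hQ
  have fp1 : 2 * φ p1 = 9 := by
    rw [hp1]; simp [hp, hr0, hP, map_ofNat φ]
    linear_combination (6*φ Q - 3)*hQ
  have fs1 : 2 * φ s1 = 9 := by
    rw [hs1]; simp [hs, hr0, map_ofNat φ]
    linear_combination 3*hQ
  have n9 : (9:F) ≠ 0 := by
    have := mul_ne_zero n3 n3; norm_num at this; exact this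
  have p1n : φ p1 ≠ 0 := by
    intro h; rw [h] at fp1; apply n9; rw [← fp1]; ring
  have s1n : φ s1 ≠ 0 := by
    intro h; rw [h] at fs1; apply n9; rw [← fs1]; ring
  have hdr : ∃ t, r1 = r^2 * t := by
    rw [he_pos hj0] at hj
    by_cases hj1 : j = 1
    · subst hj1
      simp [al, be] at hj
      obtain ⟨v, hv⟩ := nz_unit hu (x := (3:R)) (by rwa [map_ofNat φ])
      exact ⟨-v*p1, by linear_combination v*hj - r1*hv⟩
    · have hb : (be j : F) ≠ 0 := by
        have n4 : (4:F) ≠ 0 := by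
          have := mul_ne_zero n2 n2; norm_num at this; exact this
        interval_cases j <;> simp_all [be]
      obtain ⟨v, hv⟩ := nz_unit hu (x := (4*(be j : R)*s1 + (9*(al j : R) - 2*be j)*r1))
        (by simp [fr1, map_ofNat φ, hb, s1n]
            have := mul_ne_zero n2 n2; norm_num at this; exact this)
      refine ⟨-v*((al j : R)*(r^2*p1^2+6*p1*r1) + 2*(be j : R)*(y*s1+q1^2-p1*r1)), ?_⟩
      linear_combination v*hj - r1*hv - 2*v*(be j : R)*s1*hy
  obtain ⟨t, ht⟩ := hdr
  -- now w'' = 0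
  simp only [he, if_true] at hk
  have hq1' : q1 = r^2*(2*t+y) := by linear_combination hy + 2*ht
  have hss : hs r p1 q1 r1 s1 = r * (r*(6*r1*t*s1 + 3*(2*t+y)*s1^2 + 6*q1*r1^2 + r^2*q1^3)) := by
    unfold hs
    linear_combination 6*r1*s1*ht + 3*s1^2*hq1'
  have : r * (r^2*hp r p1 q1 r1 s1 + 3*r*hq r p1 q1 r1 s1 + 3*hr r p1 q1 r1 s1
     + (r*(6*r1*t*s1 + 3*(2*t+y)*s1^2 + 6*q1*r1^2 + r^2*q1^3))) = 0 := by
    linear_combination hk - hss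
  have := congrArg φ ((mul_eq_zero.1 this).resolve_left hrn)
  simp [hr0, map_ofNat φ, hr, fr1, n3, p1n, s1n] at this

theorem p0_caseB {φ : R →+* F} (hu : ∀ x : R, φ x ≠ 0 → IsUnit x) (hF : Good F)
    {i j k : ℕ} (hj6 : j ≤ 6) {r P Q : R} (hr : r ≠ 0) (hr0 : φ r = 0)
    (HB : ∀ P κ : F, he i 0 P κ 1 1 = 0 → he1 j 0 P κ 1 1 = 0 → he2 k 0 P κ 1 1 = 0 →
      (i = 4 ∧ k = 0 ∧ j ≠ 0 ∧ P = 1))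
    (hi : fe i (r^3*P) (r^2*Q) r 1 = 0) (hj : fe1 j (r^3*P) (r^2*Q) r 1 = 0)
    (hk : fe2 k (r^3*P) (r^2*Q) r 1 = 0) : False := by
  have e : r = r * 1 := by ring
  have hi' : he i r P Q 1 1 = 0 := he_of_fe i hr (by rwa [mul_one])
  have hj' : he1 j r P Q 1 1 = 0 := he1_of_fe1 j hr (by rwa [mul_one])
  have hk' : he2 k r P Q 1 1 = 0 := he2_of_fe2 k hr (by rwa [mul_one])
  have a1 := congrArg φ hi'
  have a2 := congrArg φ hj'
  have a3 := congrArg φ hk'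
  rw [he_map, hr0, map_one, map_zero] at a1
  rw [he1_map, hr0, map_one, map_zero] at a2
  rw [he2_map, hr0, map_one, map_zero] at a3
  obtain ⟨rfl, rfl, h1, h2⟩ := HB _ _ a1 a2 a3
  exact p0_exc hu hF h1 hj6 hr hr0 h2 hi' hj' hk'

theorem be_ne (hF : Good F) {j : ℕ} (hj1 : j ≠ 1) (hj0 : j ≠ 0) (hj6 : j ≤ 6) :
    (be j : F) ≠ 0 := by
  have n2 := hF.n2
  have n3 := hF.n3
  have n4 : (4:F) ≠ 0 := by
    have := mul_ne_zero n2 n2; norm_num at this; exact this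
  interval_cases j <;> simp_all [be]

theorem p0_zero {φ : R →+* F} (hu : ∀ x : R, φ x ≠ 0 → IsUnit x)
    (hv : ∀ a b : R, a ∣ b ∨ b ∣ a) (hF : Good F)
    {j k : ℕ} (hj1 : j ≠ 1) (hj6 : j ≤ 6) (hk6 : k ≤ 6)
    {q r : R} (hq0 : φ q = 0) (hr0 : φ r = 0) (hr : r ≠ 0)
    (H0 : ∀ Q : F, Q ≠ 0 → he1 j 0 (-3*Q) Q 0 1 = 0 → he2 k 0 (-3*Q) Q 0 1 = 0 → False)
    (hj : fe1 j (-3*r) q r 1 = 0) (hk : fe2 k (-3*r) q r 1 = 0) : False := by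
  have n2 := hF.n2
  have n3 := hF.n3
  have h1 : gp (-3*r) q r 1 = r * (-12*(3*r^2+q^2)) := by unfold gp; ring
  have h3 : gr (-3*r) q r 1 = r * (-3+6*q+q^2-4*r^2) := by unfold gr; ring
  have h2 : gq (-3*r) q r 1 = q^2*(2+2*q) + r^2*(-6+2*q) := by unfold gq; ring
  have h4 : gs (-3*r) q r 1 = q*(3+q^2) + r^2*(6+6*q) := by unfold gs; ring
  by_cases hj0 : j = 0
  · subst hj0
    obtain ⟨v, hv'⟩ := nz_unit hu (x := (3+q^2+3*q*(2+2*q))) (by simpa [hq0, map_ofNat φ] using n3)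
    have hw := hj
    unfold fe1 fe at hj; simp only [if_true] at hj
    rw [h1, h2, h3, h4] at hj
    obtain ⟨t, ht⟩ : ∃ t, q = r*t := by
      refine ⟨-v*(-12*(3*r^2+q^2) + 3*(-3+6*q+q^2-4*r^2) + 3*r*(-6+2*q)+r*(6+6*q)), ?_⟩
      linear_combination v*hj - q*hv'
    refine p0_w (φ := φ) (c := -3) (π := (-12*(3*r^2+q^2))) (ρ := (-3+6*q+q^2-4*r^2))
      (ξ := q*t*(2+2*q) + r*(-6+2*q)) hF hk6 hr h1 ?_ h3 ?_ ?_ ?_ ?_ hw hk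
    · rw [h2]; linear_combination q*(2+2*q)*ht
    · simp [hq0, hr0]
    · simp [hq0, hr0]
    · simp [hq0, hr0, map_ofNat φ]
    · simpa using n3
  · have hj' := hj
    unfold fe1 at hj
    rw [fe_pos hj0, h1, h2, h3, h4] at hj
    have hb := be_ne hF hj1 hj0 hj6
    set a1 := 2+2*q with ha1
    set b1 := -6+2*q with hb1
    set c1 := 3+q^2 with hc1
    set d1 := 6+6*q with hd1
    set pt := -12*(3*r^2+q^2) with hpt
    set rt := -3+6*q+q^2-4*r^2 with hrt
    set U2 : R := 2*(be j : R)*(a1*c1+q*a1^2) with hU2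
    set U1 : R := (al j : R)*(pt+3*rt)^2+2*(be j : R)*(q^2*a1*d1+b1*(q*c1+r^2*d1)+2*q^2*a1*b1
      +r^2*b1^2-rt^2-pt*rt) with hU1
    have key : r^2*U1 + q^3*U2 = 0 := by rw [hU1, hU2]; linear_combination hj
    have f1 : φ U1 ≠ 0 := by
      have : φ U1 = 3*3*(9*(al j : F)-2*(be j : F)) := by
        simp [hU1, hq0, hr0, hpt, hrt, ha1, hb1, hc1, hd1, map_ofNat φ]; ring
      rw [this]; exact mul_ne_zero (mul_ne_zero n3 n3) (hF.nine hj0 hj6)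
    have f2 : φ U2 ≠ 0 := by
      have : φ U2 = 2*2*3*(be j : F) := by
        simp [hU2, hq0, ha1, hc1, map_ofNat φ]; ring
      rw [this]; exact mul_ne_zero (mul_ne_zero (mul_ne_zero n2 n2) n3) hb
    obtain ⟨v1, hv1⟩ := nz_unit hu f1
    obtain ⟨v2, hv2⟩ := nz_unit hu f2
    have hq : q ≠ 0 := by
      rintro rfl
      have : r^2*U1 = 0 := by linear_combination key
      rcases mul_eq_zero.1 this with h | h
      · exact hr (pow_eq_zero_iff (two_ne_zero) |>.1 h)
      · rw [h] at f1; simp at f1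
    obtain ⟨x, hx⟩ : q ∣ r := by
      rcases hv q r with h | ⟨m, hm⟩
      · exact h
      · exfalso
        have : r^2*(U1 + r*m^3*U2) = 0 := by
          linear_combination key - U2*(q^2+q*r*m+(r*m)^2)*hm
        have := congrArg φ ((mul_eq_zero.1 this).resolve_left (pow_ne_zero _ hr))
        simp [hr0] at this
        exact f1 this
    have hx2 : x^2*U1 + q*U2 = 0 := by
      have : q^2*(x^2*U1+q*U2) = 0 := by linear_combination key - U1*(r+q*x)*hx
      exact (mul_eq_zero.1 this).resolve_left (pow_ne_zero _ hq)
    have hx0 : φ x = 0 := by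
      have := congrArg φ hx2
      simp [hq0, f1] at this
      exact this
    obtain ⟨Q, hQ⟩ : ∃ Q, Q = -U1*v2 := ⟨_, rfl⟩
    have hqx : q = x^2*Q := by rw [hQ]; linear_combination v2*hx2 - q*hv2
    have hQ0 : φ Q ≠ 0 := by
      have hv20 : φ v2 ≠ 0 := by
        intro h
        have := congrArg φ hv2
        simp [h] at this
      rw [hQ]; simp [f1, hv20]
    have hxn : x ≠ 0 := by rintro rfl; apply hr; rw [hx]; ring
    have e1 : -3*r = x^3*(-3*Q) := by linear_combination -3*hx - 3*x*hqx
    have e2 : r = x*(x^2*Q) := by linear_combination hx + x*hqx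
    rw [e1, hqx] at hj' hk
    rw [e2] at hj' hk
    have k1 := congrArg φ (he1_of_fe1 j hxn hj')
    have k2 := congrArg φ (he2_of_fe2 k hxn hk)
    rw [he1_map] at k1
    rw [he2_map] at k2
    simp only [map_mul, map_neg, map_ofNat φ, map_pow, hx0, map_one, map_zero] at k1 k2
    refine H0 (φ Q) hQ0 ?_ ?_
    · simpa using k1
    · simpa using k2

theorem p0_main {φ : R →+* F} (hu : ∀ x : R, φ x ≠ 0 → IsUnit x)
    (hv : ∀ a b : R, a ∣ b ∨ b ∣ a) (hF : Good F)
    {i j k : ℕ} (hi1 : 1 ≤ i) (hi5 : i ≤ 5) (hij : ¬ (i = 1 ∧ j = 1)) (hj6 : j ≤ 6) (hk6 : k ≤ 6)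
    {p q r : R} (hp0 : φ p = 0) (hq0 : φ q = 0) (hr0 : φ r = 0) (hpr : ¬ (p = 0 ∧ r = 0))
    (HB : 2 ≤ i → ∀ P κ : F, he i 0 P κ 1 1 = 0 → he1 j 0 P κ 1 1 = 0 → he2 k 0 P κ 1 1 = 0 →
      (i = 4 ∧ k = 0 ∧ j ≠ 0 ∧ P = 1))
    (H0 : i = 1 → ∀ Q : F, Q ≠ 0 → he1 j 0 (-3*Q) Q 0 1 = 0 → he2 k 0 (-3*Q) Q 0 1 = 0 → False)
    (hi : fe i p q r 1 = 0) (hj : fe1 j p q r 1 = 0) (hk : fe2 k p q r 1 = 0) : False := by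
  have n2 := hF.n2
  by_cases hi' : i = 1
  · subst hi'
    have e : p = -3*r := by
      simp [fe, al, be] at hi
      linear_combination hi
    subst e
    have hr : r ≠ 0 := by rintro rfl; simp at hpr
    exact p0_zero hu hv hF (fun h => hij ⟨rfl, h⟩) hj6 hk6 hq0 hr0 hr (H0 rfl) hj hk
  · have hi2 : 2 ≤ i := by omega
    have hbi := be_ne hF hi' (by omega) (by omega : i ≤ 6)
    have hal : al i = 1 := by simp [al]; omega
    have hi0 := hi
    rw [fe_pos (by omega), hal] at hi
    have h2b : (2 * (be i : ℕ) : F) ≠ 0 := mul_ne_zero n2 hbi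
    by_cases hd : r^3 ∣ p
    · obtain ⟨P, rfl⟩ := hd
      have hr : r ≠ 0 := by rintro rfl; simp at hpr
      obtain ⟨u, hu'⟩ := nz_unit hu (x := 2*(be i:R)*(1+q)) (by simpa [hq0, map_ofNat φ] using h2b)
      obtain ⟨Q, hQ⟩ : ∃ Q, q = r^2*Q := by
        refine ⟨u*((2*be i-9) + (2*be i-6)*r^2*P - r^4*P^2), ?_⟩
        push_cast at hi
        linear_combination (-q)*hu' + u*hi
      subst hQ
      exact p0_caseB hu hF hj6 hr hr0 (HB hi2) hi0 hj hk
    · obtain ⟨m, hm⟩ := (hv (r^3) p).resolve_left hd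
      have hm0 : φ m = 0 := by
        by_contra h
        obtain ⟨u, hu'⟩ := nz_unit hu h
        exact hd ⟨u, by linear_combination -p*hu' - u*hm⟩
      have hp : p ≠ 0 := by rintro rfl; simp at hd
      refine p0_caseA hu hF (be i) h2b hj6 hk6 hp0 hq0 hr0 hm0 hp ?_ hm hj hk
      rw [← hi]; push_cast; ring
end Local3

section Local4

variable {R F : Type*} [CommRing R] [Field F] [IsDomain R]

theorem q0_K {φ : R →+* F} (hF : Good F) {k : ℕ} (hk6 : k ≤ 6) {g p1 q1 r1 s1 : R}
    (hg : g ≠ 0) (hg0 : φ g = 0) (hs : φ s1 ≠ 0)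
    (h : fe1 k (g*p1) (g^2*q1) (g*r1) s1 = 0) : φ p1 = 0 := by
  have e1 : gp (g*p1) (g^2*q1) (g*r1) s1 =
      g^3*(p1^3+3*p1*r1^2+6*g^2*p1*q1^2+6*g^2*q1^2*r1) := by unfold gp; ring
  have e2 : gq (g*p1) (g^2*q1) (g*r1) s1 = g^2*(2*p1*r1*s1 +
      g^2*(5*q1*r1^2+2*q1^2*s1+2*g^2*q1^3+4*p1*q1*r1+p1^2*q1)) := by unfold gq; ring
  have e3 : gr (g*p1) (g^2*q1) (g*r1) s1 = g*(p1*s1^2 +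
      g^2*(2*r1^3+6*q1*r1*s1+4*g^2*q1^2*r1+2*p1*r1^2+g^2*p1*q1^2)) := by unfold gr; ring
  have e4 : gs (g*p1) (g^2*q1) (g*r1) s1 = g^2*(6*r1^2*s1+3*q1*s1^2 +
      g^2*(6*q1*r1^2+g^2*q1^3)) := by unfold gs; ring
  unfold fe1 at h
  by_cases hk : k = 0
  · subst hk
    rw [e1, e2, e3, e4] at h
    unfold fe at h; simp only [if_true] at h
    have : g * (g*(g*(p1^3+3*p1*r1^2+6*g^2*p1*q1^2+6*g^2*q1^2*r1)
      + 3*(2*p1*r1*s1 + g^2*(5*q1*r1^2+2*q1^2*s1+2*g^2*q1^3+4*p1*q1*r1+p1^2*q1))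
      + (6*r1^2*s1+3*q1*s1^2 + g^2*(6*q1*r1^2+g^2*q1^3)))
      + 3*(p1*s1^2 + g^2*(2*r1^3+6*q1*r1*s1+4*g^2*q1^2*r1+2*p1*r1^2+g^2*p1*q1^2))) = 0 := by
      linear_combination h
    have := congrArg φ ((mul_eq_zero.1 this).resolve_left hg)
    simpa [hg0, map_ofNat φ, hF.n3, hs] using this
  · rw [e1, e2, e3, e4, fe_pos hk] at h
    obtain ⟨A, hA⟩ : ∃ A, A = p1^3+3*p1*r1^2+6*g^2*p1*q1^2+6*g^2*q1^2*r1 := ⟨_, rfl⟩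
    obtain ⟨B, hB⟩ : ∃ B, B = (2*p1*r1*s1 +
      g^2*(5*q1*r1^2+2*q1^2*s1+2*g^2*q1^3+4*p1*q1*r1+p1^2*q1)) := ⟨_, rfl⟩
    obtain ⟨C, hC⟩ : ∃ C, C = (p1*s1^2 +
      g^2*(2*r1^3+6*q1*r1*s1+4*g^2*q1^2*r1+2*p1*r1^2+g^2*p1*q1^2)) := ⟨_, rfl⟩
    obtain ⟨D, hD⟩ : ∃ D, D = (6*r1^2*s1+3*q1*s1^2 + g^2*(6*q1*r1^2+g^2*q1^3)) := ⟨_, rfl⟩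
    rw [← hA, ← hB, ← hC, ← hD] at h
    have : g^2 * ((al k : R)*(g^2*A+3*C)^2+2*(be k:R)*(g^2*B*D+g^2*B^2-C^2-g^2*A*C)) = 0 := by
      linear_combination h
    have := congrArg φ ((mul_eq_zero.1 this).resolve_left (pow_ne_zero _ hg))
    have hC' : φ C = φ p1 * (φ s1)^2 := by rw [hC]; simp [hg0]
    simp [hg0, map_ofNat φ] at this
    have : (9*(al k : F) - 2*(be k:F)) * (φ C)^2 = 0 := by linear_combination this
    have := (mul_eq_zero.1 this).resolve_left (hF.nine hk hk6)
    rw [hC'] at this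
    simpa [hs] using this

theorem q0_main {φ : R →+* F} (hu : ∀ x : R, φ x ≠ 0 → IsUnit x)
    (hv : ∀ a b : R, a ∣ b ∨ b ∣ a) (hF : Good F)
    {i j k : ℕ} (hi1 : 1 ≤ i) (hi5 : i ≤ 5) (hj6 : j ≤ 6) (hk6 : k ≤ 6)
    {p r s : R} (hp0 : φ p = 0) (hs0 : φ s = -1) (hr0 : φ r = 0) (hpr : ¬ (p = 0 ∧ r = 0))
    (hN : 2 ≤ i → j ≠ 0 → 9 * (be i : F) * (al j : F) - 2*(be j : F) ≠ 0)
    (hi : fe i p 1 r s = 0) (hj : fe1 j p 1 r s = 0) (hk : fe2 k p 1 r s = 0) : False := by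
  have n2 := hF.n2
  have n3 := hF.n3
  obtain ⟨σ, rfl⟩ : ∃ σ, s = -1 + σ := ⟨s+1, by ring⟩
  have hσ0 : φ σ = 0 := by simpa using hs0
  have h1 : gp p 1 r (-1+σ) = p^3+3*p*r^2+6*p+6*r := by unfold gp; ring
  have h2 : gq p 1 r (-1+σ) = 5*r^2+2*σ+2*p*r+2*p*r*σ+p^2 := by unfold gq; ring
  have h3 : gr p 1 r (-1+σ) = -2*r+6*r*σ+2*r^3+p*(2-2*σ+σ^2)+2*p*r^2 := by unfold gr; ring
  have h4 : gs p 1 r (-1+σ) = 4-6*σ+3*σ^2+6*r^2*σ := by unfold gs; ring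
  have hs4 : φ (gs p 1 r (-1+σ)) = 4 := by rw [h4]; simp [hσ0, map_ofNat φ]
  have n4 : (4:F) ≠ 0 := by
    have := mul_ne_zero n2 n2; norm_num at this; exact this
  by_cases hj0 : j = 0
  · subst hj0
    unfold fe1 fe at hj; simp only [if_true] at hj
    have := congrArg φ hj
    rw [map_add, hs4, h1, h2, h3] at this
    simp [hp0, hr0, hσ0, n4] at this
  unfold fe2 at hk
  unfold fe1 at hj
  rw [fe_pos hj0] at hj
  obtain ⟨s1, hs1⟩ : ∃ x, x = gs p 1 r (-1+σ) := ⟨_, rfl⟩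
  rw [← hs1] at hj hk hs4
  have hs1n : φ s1 ≠ 0 := by rw [hs4]; exact n4
  by_cases hi' : i = 1
  · subst hi'
    have e : p = -3*r := by
      simp [fe, al, be] at hi
      linear_combination hi
    subst e
    have hr : r ≠ 0 := by rintro rfl; simp at hpr
    obtain ⟨p1, hp1⟩ : ∃ x : R, x = -12 + r^2*(-36) := ⟨_, rfl⟩
    obtain ⟨r1, hr1⟩ : ∃ x : R, x = -8 + 12*σ-3*σ^2 - 4*r^2 := ⟨_, rfl⟩
    have h1' : gp (-3*r) 1 r (-1+σ) = r*p1 := by rw [h1, hp1]; ring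
    have h3' : gr (-3*r) 1 r (-1+σ) = r*r1 := by rw [h3, hr1]; ring
    have fp1 : φ p1 = -12 := by rw [hp1]; simp [hr0, map_ofNat φ]
    have fr1 : φ r1 = -8 := by rw [hr1]; simp [hr0, hσ0, map_ofNat φ]
    have fp1n : φ p1 ≠ 0 := by
      rw [fp1]; have := mul_ne_zero n4 n3; norm_num at this; simpa using this
    by_cases hj1 : j = 1
    · subst hj1
      rw [h1', h3'] at hj
      have : r^2*(p1+3*r1)^2 = 0 := by
        simp [al, be] at hj; rw [← mul_pow, mul_add, show r*p1+r*(3*r1) = r*p1+3*(r*r1) by ring, hj]; ring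
      have := congrArg φ ((mul_eq_zero.1 this).resolve_left (pow_ne_zero _ hr))
      simp [fp1, fr1, map_ofNat φ] at this
      have h36 : (2*2*3*3 : F) = 0 := by linear_combination -this
      exact mul_ne_zero (mul_ne_zero (mul_ne_zero n2 n2) n3) n3 h36
    · have hb := be_ne hF hj1 hj0 hj6
      obtain ⟨q', hq'⟩ : ∃ x, x = gq (-3*r) 1 r (-1+σ) := ⟨_, rfl⟩
      rw [← hq', h1', h3'] at hj
      have fq : φ q' = 0 := by rw [hq', h2]; simp [hr0, hσ0]
      obtain ⟨v, hv'⟩ := nz_unit hu (x := 2*(be j : R)*(s1+q'))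
        (by simp [map_ofNat φ, fq, hs1n, hb, n2])
      have : q' = r^2 * (-v*((al j : R)*(p1+3*r1)^2 - 2*(be j:R)*(r1^2+p1*r1))) := by
        linear_combination v*hj - q'*hv'
      rw [h1', h3', ← hq', this] at hk
      exact fp1n (q0_K hF hk6 hr hr0 hs1n hk)
  · have hi2 : 2 ≤ i := by omega
    have hbi := be_ne hF hi' (by omega) (by omega : i ≤ 6)
    have hal : al i = 1 := by simp [al]; omega
    rw [fe_pos (by omega), hal] at hi
    push_cast at hi
    obtain ⟨g, p0, r0, rfl, rfl, h01⟩ : ∃ g p0 r0, p = g*p0 ∧ r = g*r0 ∧ (p0 = 1 ∨ r0 = 1) := by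
      rcases hv p r with ⟨m, hm⟩ | ⟨m, hm⟩
      · exact ⟨p, 1, m, by ring, hm, Or.inl rfl⟩
      · exact ⟨r, m, 1, hm, by ring, Or.inr rfl⟩
    have hg : g ≠ 0 := by rintro rfl; simp at hpr
    have hg0 : φ g = 0 := by
      rcases h01 with h | h
      · rw [h] at hp0; simpa using hp0
      · rw [h] at hr0; simpa using hr0
    obtain ⟨u, hu'⟩ := nz_unit hu (x := 2*(be i:R)) (by simp [map_ofNat φ, n2, hbi])
    obtain ⟨τ, hτ⟩ : ∃ x, x = u*(2*(be i : R)*(r0^2+p0*r0)-(p0+3*r0)^2) := ⟨_, rfl⟩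
    have hσ : σ = g^2*τ := by rw [hτ]; linear_combination u*hi - σ*hu'
    have hτ2 : 2*(be i : R)*τ = 2*(be i : R)*(r0^2+p0*r0)-(p0+3*r0)^2 := by
      rw [hτ]; linear_combination (2*(be i : R)*(r0^2+p0*r0)-(p0+3*r0)^2)*hu'
    obtain ⟨p1, hp1⟩ : ∃ x : R, x = 6*(p0+r0)+g^2*(p0^3+3*p0*r0^2) := ⟨_, rfl⟩
    obtain ⟨q1, hq1⟩ : ∃ x : R, x = 5*r0^2+2*τ+2*p0*r0+2*p0*r0*σ+p0^2 := ⟨_, rfl⟩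
    obtain ⟨r1, hr1⟩ : ∃ x : R, x = -2*r0+2*p0+(6*r0*σ-2*p0*σ+p0*σ^2)+g^2*(2*r0^3+2*p0*r0^2) :=
      ⟨_, rfl⟩
    have h1' : gp (g*p0) 1 (g*r0) (-1+σ) = g*p1 := by rw [h1, hp1]; ring
    have h2' : gq (g*p0) 1 (g*r0) (-1+σ) = g^2*q1 := by
      rw [h2, hq1]; linear_combination 2*hσ
    have h3' : gr (g*p0) 1 (g*r0) (-1+σ) = g*r1 := by rw [h3, hr1]; ring
    rw [h1', h2', h3'] at hj hk
    have K := q0_K hF hk6 hg hg0 hs1n hk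
    have hj2 : g^2*((al j : R)*(p1+3*r1)^2+2*(be j:R)*(q1*s1+g^2*q1^2-r1^2-p1*r1)) = 0 := by
      linear_combination hj
    have hj3 := congrArg φ ((mul_eq_zero.1 hj2).resolve_left (pow_ne_zero _ hg))
    simp [K, hg0, hs4, map_ofNat φ] at hj3
    have K' : φ p0 + φ r0 = 0 := by
      rw [hp1] at K
      simp [hg0, map_ofNat φ] at K
      rcases K with K | K
      · exfalso; apply mul_ne_zero n2 n3; rw [← K]; norm_num
      · exact K
    have hr0' : φ r0 = - φ p0 := by linear_combination K'
    have hpn : φ p0 ≠ 0 := by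
      intro h
      rcases h01 with h' | h'
      · rw [h'] at h; simp at h
      · rw [h', h] at K'; simp at K'
    have hq1' : φ q1 = 4*(φ p0)^2 + 2*φ τ := by
      rw [hq1]; simp [hσ0, map_ofNat φ, hr0']; ring
    have hr1' : φ r1 = 4*φ p0 := by
      rw [hr1]; simp [hσ0, hg0, map_ofNat φ, hr0']; ring
    have hτ3 := congrArg φ hτ2
    simp [map_ofNat φ, hr0'] at hτ3
    rw [hq1', hr1'] at hj3
    have hτ4 : (be i : F) * φ τ = -2*(φ p0)^2 := by
      apply mul_left_cancel₀ n2; linear_combination hτ3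
    apply hN hi2 hj0
    apply mul_left_cancel₀ (pow_ne_zero 2 hpn)
    apply mul_left_cancel₀ n4
    apply mul_left_cancel₀ n4
    linear_combination (be i : F) * hj3 - 16*(be j : F)*hτ4
end Local4

section Local5

/-- the gadget map over an arbitrary ring -/
def Gw {A : Type*} [CommRing A] (w x y _z : A) : A := w^3+2*x^3+y^3
def Gx {A : Type*} [CommRing A] (w x y z : A) : A := w^2*x+2*x^2*y+y^2*z
def Gy {A : Type*} [CommRing A] (w x y z : A) : A := w*x^2+2*x*y^2+y*z^2
def Gz {A : Type*} [CommRing A] (_w x y z : A) : A := x^3+2*y^3+z^3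

/-- the conditions: `j = 0` : `w = 0`; `j = 1` : `(w+z)^2 = 0`; `2 ≤ j ≤ 5`; `j = 6` : `xy = wz`. -/
def EE {A : Type*} [CommRing A] (j : ℕ) (w x y z : A) : A :=
  if j = 0 then w else (al j : A)*(w+z)^2 + (be j : A)*(x*y-w*z)
def EE1 {A : Type*} [CommRing A] (j : ℕ) (w x y z : A) : A :=
  EE j (Gw w x y z) (Gx w x y z) (Gy w x y z) (Gz w x y z)
def EE2 {A : Type*} [CommRing A] (j : ℕ) (w x y z : A) : A :=
  EE1 j (Gw w x y z) (Gx w x y z) (Gy w x y z) (Gz w x y z)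

variable {R F : Type*} [CommRing R] [Field F]

theorem fe_EE (j : ℕ) {w x y z : R} (h : EE j w x y z = 0) :
    fe j (w+3*x+3*y+z) (w+x-y-z) (w-x-y+z) (w-3*x+3*y-z) = 0 := by
  unfold EE at h; unfold fe
  split_ifs at h ⊢
  · linear_combination 8*h
  · linear_combination 16*h

theorem g_G (w x y z : R) :
    gp (w+3*x+3*y+z) (w+x-y-z) (w-x-y+z) (w-3*x+3*y-z) =
      16*(Gw w x y z+3*Gx w x y z+3*Gy w x y z+Gz w x y z) ∧
    gq (w+3*x+3*y+z) (w+x-y-z) (w-x-y+z) (w-3*x+3*y-z) =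
      16*(Gw w x y z+Gx w x y z-Gy w x y z-Gz w x y z) ∧
    gr (w+3*x+3*y+z) (w+x-y-z) (w-x-y+z) (w-3*x+3*y-z) =
      16*(Gw w x y z-Gx w x y z-Gy w x y z+Gz w x y z) ∧
    gs (w+3*x+3*y+z) (w+x-y-z) (w-x-y+z) (w-3*x+3*y-z) =
      16*(Gw w x y z-3*Gx w x y z+3*Gy w x y z-Gz w x y z) := by
  unfold gp gq gr gs Gw Gx Gy Gz
  refine ⟨?_, ?_, ?_, ?_⟩ <;> ring

theorem fe1_EE1 (j : ℕ) {w x y z : R} (h : EE1 j w x y z = 0) :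
    fe1 j (w+3*x+3*y+z) (w+x-y-z) (w-x-y+z) (w-3*x+3*y-z) = 0 := by
  obtain ⟨h1, h2, h3, h4⟩ := g_G w x y z
  unfold fe1
  rw [h1, h2, h3, h4, fe_smul, fe_EE j h, mul_zero]

theorem fe2_EE2 (j : ℕ) {w x y z : R} (h : EE2 j w x y z = 0) :
    fe2 j (w+3*x+3*y+z) (w+x-y-z) (w-x-y+z) (w-3*x+3*y-z) = 0 := by
  obtain ⟨h1, h2, h3, h4⟩ := g_G w x y z
  unfold fe2
  rw [h1, h2, h3, h4, fe1_smul, fe1_EE1 j h, mul_zero]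

theorem EE_twist (j : ℕ) {w x y z o : R} (ho : o^3 = 1) :
    EE j w (o*x) (o^2*y) z = EE j w x y z := by
  unfold EE; split_ifs
  · rfl
  · linear_combination (be j : R)*x*y*ho

theorem G_twist {w x y z o : R} (ho : o^3 = 1) :
    Gw w (o*x) (o^2*y) z = Gw w x y z ∧ Gx w (o*x) (o^2*y) z = o * Gx w x y z ∧
    Gy w (o*x) (o^2*y) z = o^2 * Gy w x y z ∧ Gz w (o*x) (o^2*y) z = Gz w x y z := by
  unfold Gw Gx Gy Gz
  refine ⟨?_, ?_, ?_, ?_⟩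
  · linear_combination (2*x^3 + y^3*(o^3+1))*ho
  · linear_combination (2*o*x^2*y+ o*y^2*z)*ho
  · linear_combination (2*o^2*x*y^2)*ho
  · linear_combination (x^3 + 2*y^3*(o^3+1))*ho

theorem EE1_twist (j : ℕ) {w x y z o : R} (ho : o^3 = 1) :
    EE1 j w (o*x) (o^2*y) z = EE1 j w x y z := by
  obtain ⟨h1, h2, h3, h4⟩ := G_twist (w := w) (x := x) (y := y) (z := z) ho
  unfold EE1
  rw [h1, h2, h3, h4, EE_twist j ho]

theorem EE2_twist (j : ℕ) {w x y z o : R} (ho : o^3 = 1) :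
    EE2 j w (o*x) (o^2*y) z = EE2 j w x y z := by
  obtain ⟨h1, h2, h3, h4⟩ := G_twist (w := w) (x := x) (y := y) (z := z) ho
  unfold EE2
  rw [h1, h2, h3, h4, EE1_twist j ho]

variable [IsDomain R]

theorem pt0 {φ : R →+* F} (hu : ∀ x : R, φ x ≠ 0 → IsUnit x)
    (hv : ∀ a b : R, a ∣ b ∨ b ∣ a) (hF : Good F)
    (hω : ∀ o : F, o^3 = 1 → ∃ ω : R, ω^3 = 1 ∧ φ ω = o)
    {i j k : ℕ} (hi1 : 1 ≤ i) (hi5 : i ≤ 5) (hij : ¬ (i = 1 ∧ j = 1)) (hj6 : j ≤ 6) (hk6 : k ≤ 6)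
    (HB : 2 ≤ i → ∀ P κ : F, he i 0 P κ 1 1 = 0 → he1 j 0 P κ 1 1 = 0 → he2 k 0 P κ 1 1 = 0 →
      (i = 4 ∧ k = 0 ∧ j ≠ 0 ∧ P = 1))
    (H0 : i = 1 → ∀ Q : F, Q ≠ 0 → he1 j 0 (-3*Q) Q 0 1 = 0 → he2 k 0 (-3*Q) Q 0 1 = 0 → False)
    (hN : 2 ≤ i → j ≠ 0 → 9 * (be i : F) * (al j : F) - 2*(be j : F) ≠ 0)
    {x y z : R} (hz : φ z = -1) (hxy : φ x * φ y = -1) (hx : (φ x)^3 = 1 ∨ (φ x)^3 = -1)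
    (hi : EE i 1 x y z = 0) (hj : EE1 j 1 x y z = 0) (hk : EE2 k 1 x y z = 0) :
    1 + z = 0 ∧ x^3+y^3 = 0 := by
  have n2 := hF.n2
  have n4 : (4:F) ≠ 0 := by
    have := mul_ne_zero n2 n2; norm_num at this; exact this
  have n4R : (4:R) ≠ 0 := by
    intro h; apply n4; rw [← map_ofNat φ, h, map_zero]
  -- the end of the argument
  have fin : ∀ ω u : R, ω^3 = 1 → u ≠ 0 → u * (1+3*(ω*x)+3*(ω^2*y)+z) = 0 ∧
      u * (1-ω*x-ω^2*y+z) = 0 → 1 + z = 0 ∧ x^3+y^3 = 0 := by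
    rintro ω u ho hu0 ⟨h1, h2⟩
    have h1 := (mul_eq_zero.1 h1).resolve_left hu0
    have h2 := (mul_eq_zero.1 h2).resolve_left hu0
    have h3 : ω*x+ω^2*y = 0 := by
      apply mul_left_cancel₀ n4R; linear_combination h1 - h2
    refine ⟨by linear_combination h2 + h3, ?_⟩
    have h4 : (ω*x)^3 + (ω^2*y)^3 = 0 := by
      linear_combination ((ω*x)^2 - ω*x*(ω^2*y) + (ω^2*y)^2)*h3
    linear_combination h4 - (x^3 + y^3*(ω^3+1))*ho
  have hy3 : (φ x)^3 * (φ y)^3 = -1 := by rw [← mul_pow, hxy]; ring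
  rcases hx with hx | hx
  · -- P0'
    rw [hx, one_mul] at hy3
    obtain ⟨ω, ho, hφ⟩ := hω (-φ y) (by linear_combination -hy3)
    rw [← EE_twist i ho] at hi
    rw [← EE1_twist j ho] at hj
    rw [← EE2_twist k ho] at hk
    have hX : φ (ω*x) = 1 := by rw [map_mul, hφ]; linear_combination -hxy
    have hY : φ (ω^2*y) = -1 := by rw [map_mul, map_pow, hφ]; linear_combination hy3
    have gi := fe_EE i hi
    have gj := fe1_EE1 j hj
    have gk := fe2_EE2 k hk
    obtain ⟨u, hu'⟩ := nz_unit hu (x := 1+ω*x-ω^2*y-z) (by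
      rw [map_sub, map_sub, map_add, hX, hY, hz, map_one]; norm_num; exact n4)
    have hu'' := hu'
    rw [mul_comm] at hu''
    have fu : φ u * 4 = 1 := by
      have := congrArg φ hu''
      rw [map_mul, map_sub, map_sub, map_add, hX, hY, hz, map_one] at this
      linear_combination this
    have hu0 : u ≠ 0 := by rintro rfl; simp at hu'
    refine fin ω u ho hu0 ?_
    by_contra hcon
    refine q0_main hu hv hF hi1 hi5 hj6 hk6 (p := u*(1+3*(ω*x)+3*(ω^2*y)+z))
      (r := u*(1-ω*x-ω^2*y+z)) (s := u*(1-3*(ω*x)+3*(ω^2*y)-z)) ?_ ?_ ?_ hcon hN ?_ ?_ ?_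
    · simp only [map_mul φ u, map_add, map_mul φ 3, hX, hY, hz, map_ofNat φ, map_one]; ring
    · simp only [map_mul φ u, map_add, map_sub, map_mul φ 3, hX, hY, hz, map_ofNat φ, map_one]
      linear_combination -fu
    · simp only [map_mul φ u, map_add, map_sub, hX, hY, hz, map_ofNat φ, map_one]; ring
    · have e := fe_smul i u (1+3*(ω*x)+3*(ω^2*y)+z) (1+ω*x-ω^2*y-z) (1-ω*x-ω^2*y+z)
        (1-3*(ω*x)+3*(ω^2*y)-z)
      rw [gi, mul_zero, hu''] at e
      exact e
    · have e := fe1_smul j u (1+3*(ω*x)+3*(ω^2*y)+z) (1+ω*x-ω^2*y-z) (1-ω*x-ω^2*y+z)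
        (1-3*(ω*x)+3*(ω^2*y)-z)
      rw [gj, mul_zero, hu''] at e
      exact e
    · have e := fe2_smul k u (1+3*(ω*x)+3*(ω^2*y)+z) (1+ω*x-ω^2*y-z) (1-ω*x-ω^2*y+z)
        (1-3*(ω*x)+3*(ω^2*y)-z)
      rw [gk, mul_zero, hu''] at e
      exact e
  · -- P0
    rw [hx] at hy3
    obtain ⟨ω, ho, hφ⟩ := hω (φ y) (by linear_combination -hy3)
    rw [← EE_twist i ho] at hi
    rw [← EE1_twist j ho] at hj
    rw [← EE2_twist k ho] at hk
    have hX : φ (ω*x) = -1 := by rw [map_mul, hφ]; linear_combination hxy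
    have hY : φ (ω^2*y) = 1 := by rw [map_mul, map_pow, hφ]; linear_combination -hy3
    have gi := fe_EE i hi
    have gj := fe1_EE1 j hj
    have gk := fe2_EE2 k hk
    obtain ⟨u, hu'⟩ := nz_unit hu (x := 1-3*(ω*x)+3*(ω^2*y)-z) (by
      rw [map_sub, map_add, map_sub, map_mul φ 3, map_mul φ 3, hX, hY, hz, map_one, map_ofNat φ]
      have := mul_ne_zero n4 n2
      norm_num at this ⊢; exact this)
    have hu'' := hu'
    rw [mul_comm] at hu''
    have hu0 : u ≠ 0 := by rintro rfl; simp at hu'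
    refine fin ω u ho hu0 ?_
    by_contra hcon
    refine p0_main hu hv hF hi1 hi5 hij hj6 hk6 (p := u*(1+3*(ω*x)+3*(ω^2*y)+z))
      (r := u*(1-ω*x-ω^2*y+z)) (q := u*(1+ω*x-ω^2*y-z)) ?_ ?_ ?_ hcon HB H0 ?_ ?_ ?_
    · simp only [map_mul φ u, map_add, map_mul φ 3, hX, hY, hz, map_ofNat φ, map_one]; ring
    · simp only [map_mul φ u, map_add, map_sub, map_mul φ 3, hX, hY, hz, map_ofNat φ, map_one]; ring
    · simp only [map_mul φ u, map_add, map_sub, hX, hY, hz, map_ofNat φ, map_one]; ring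
    · have e := fe_smul i u (1+3*(ω*x)+3*(ω^2*y)+z) (1+ω*x-ω^2*y-z) (1-ω*x-ω^2*y+z)
        (1-3*(ω*x)+3*(ω^2*y)-z)
      rw [gi, mul_zero, hu''] at e
      exact e
    · have e := fe1_smul j u (1+3*(ω*x)+3*(ω^2*y)+z) (1+ω*x-ω^2*y-z) (1-ω*x-ω^2*y+z)
        (1-3*(ω*x)+3*(ω^2*y)-z)
      rw [gj, mul_zero, hu''] at e
      exact e
    · have e := fe2_smul k u (1+3*(ω*x)+3*(ω^2*y)+z) (1+ω*x-ω^2*y-z) (1-ω*x-ω^2*y+z)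
        (1-3*(ω*x)+3*(ω^2*y)-z)
      rw [gk, mul_zero, hu''] at e
      exact e
end Local5

section Local6

variable {R F : Type*} [CommRing R] [Field F]

/-- `x ≡ n + g t` with `t` known in the residue field -/
def Lin (φ : R →+* F) (g x : R) (n : ℤ) (t : F) : Prop := ∃ s : R, x = (n:R) + g*s ∧ φ s = t

theorem Lin.add {φ : R →+* F} {g x y : R} {n m : ℤ} {t u : F} (hx : Lin φ g x n t)
    (hy : Lin φ g y m u) : Lin φ g (x+y) (n+m) (t+u) := by
  obtain ⟨s, rfl, rfl⟩ := hx
  obtain ⟨r, rfl, rfl⟩ := hy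
  exact ⟨s+r, by push_cast; ring, by simp⟩

theorem Lin.sub {φ : R →+* F} {g x y : R} {n m : ℤ} {t u : F} (hx : Lin φ g x n t)
    (hy : Lin φ g y m u) : Lin φ g (x-y) (n-m) (t-u) := by
  obtain ⟨s, rfl, rfl⟩ := hx
  obtain ⟨r, rfl, rfl⟩ := hy
  exact ⟨s-r, by push_cast; ring, by simp⟩

theorem Lin.mul {φ : R →+* F} {g x y : R} (hg : φ g = 0) {n m : ℤ} {t u : F}
    (hx : Lin φ g x n t) (hy : Lin φ g y m u) : Lin φ g (x*y) (n*m) (n*u+m*t) := by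
  obtain ⟨s, rfl, rfl⟩ := hx
  obtain ⟨r, rfl, rfl⟩ := hy
  exact ⟨n*r+m*s+g*s*r, by push_cast; ring, by simp [hg]⟩

theorem Lin.smul {φ : R →+* F} {g x : R} (c : ℕ) {n : ℤ} {t : F} (hx : Lin φ g x n t) :
    Lin φ g (c*x) (c*n) (c*t) := by
  obtain ⟨s, rfl, rfl⟩ := hx
  exact ⟨c*s, by push_cast; ring, by simp⟩

theorem Lin.sq {φ : R →+* F} {g x : R} (hg : φ g = 0) {n : ℤ} {t : F} (hx : Lin φ g x n t) :
    Lin φ g (x^2) (n^2) (2*n*t) := by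
  have := hx.mul hg hx
  rw [← pow_two, ← pow_two] at this
  convert this using 1; ring

theorem Lin.cube {φ : R →+* F} {g x : R} (hg : φ g = 0) {n : ℤ} {t : F} (hx : Lin φ g x n t) :
    Lin φ g (x^3) (n^3) (3*n^2*t) := by
  have := (hx.sq hg).mul hg hx
  rw [← pow_succ, ← pow_succ] at this
  convert this using 1; push_cast; ring

theorem Lin.zero [IsDomain R] {φ : R →+* F} {g : R} {t : F} (h : Lin φ g 0 0 t) (hg : g ≠ 0) :
    t = 0 := by
  obtain ⟨s, h1, rfl⟩ := h
  simp [hg] at h1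
  simp [h1]

def dGw (w x y z tw tx ty tz : F) : F := 3*w^2*tw + 6*x^2*tx + 3*y^2*ty
def dGx (w x y z tw tx ty tz : F) : F :=
  2*w*x*tw + w^2*tx + 4*x*y*tx + 2*x^2*ty + 2*y*z*ty + y^2*tz
def dGy (w x y z tw tx ty tz : F) : F :=
  x^2*tw + 2*w*x*tx + 2*y^2*tx + 4*x*y*ty + z^2*ty + 2*y*z*tz
def dGz (w x y z tw tx ty tz : F) : F := 3*x^2*tx + 6*y^2*ty + 3*z^2*tz
def dEE (j : ℕ) (w x y z tw tx ty tz : F) : F :=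
  if j = 0 then tw else
    (al j : F)*(2*(w+z)*(tw+tz)) + (be j : F)*(x*ty+y*tx-(w*tz+z*tw))

theorem lin_G {φ : R →+* F} {g w x y z : R} (hg : φ g = 0) {a b c d : ℤ} {tw tx ty tz : F}
    (hw : Lin φ g w a tw) (hx : Lin φ g x b tx) (hy : Lin φ g y c ty) (hz : Lin φ g z d tz) :
    Lin φ g (Gw w x y z) (Gw a b c d) (dGw a b c d tw tx ty tz) ∧
    Lin φ g (Gx w x y z) (Gx a b c d) (dGx a b c d tw tx ty tz) ∧
    Lin φ g (Gy w x y z) (Gy a b c d) (dGy a b c d tw tx ty tz) ∧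
    Lin φ g (Gz w x y z) (Gz a b c d) (dGz a b c d tw tx ty tz) := by
  refine ⟨?_, ?_, ?_, ?_⟩
  · have := ((hw.cube hg).add ((hx.cube hg).smul 2)).add (hy.cube hg)
    convert this using 1 <;> simp [Gw, dGw]; ring
  · have := (((hw.sq hg).mul hg hx).add (((hx.sq hg).mul hg hy).smul 2)).add ((hy.sq hg).mul hg hz)
    convert this using 1 <;> simp [Gx, dGx] <;> ring
  · have := ((hw.mul hg (hx.sq hg)).add ((hx.mul hg (hy.sq hg)).smul 2)).add (hy.mul hg (hz.sq hg))
    convert this using 1 <;> simp [Gy, dGy] <;> ring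
  · have := ((hx.cube hg).add ((hy.cube hg).smul 2)).add (hz.cube hg)
    convert this using 1 <;> simp [Gz, dGz]; ring

theorem lin_EE {φ : R →+* F} {g w x y z : R} (hg : φ g = 0) (j : ℕ) {a b c d : ℤ}
    {tw tx ty tz : F}
    (hw : Lin φ g w a tw) (hx : Lin φ g x b tx) (hy : Lin φ g y c ty) (hz : Lin φ g z d tz) :
    Lin φ g (EE j w x y z) (EE j a b c d) (dEE j a b c d tw tx ty tz) := by
  by_cases hj : j = 0
  · simpa [EE, dEE, hj] using hw
  · have := (((hw.add hz).sq hg).smul (al j)).add (((hx.mul hg hy).sub (hw.mul hg hz)).smul (be j))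
    convert this using 1 <;> simp [EE, dEE, hj]

variable [IsDomain R]

theorem lin_EE_zero {φ : R →+* F} {g w x y z : R} (hg : φ g = 0) (hg0 : g ≠ 0) (j : ℕ) {a b c d : ℤ}
    {tw tx ty tz : F}
    (hw : Lin φ g w a tw) (hx : Lin φ g x b tx) (hy : Lin φ g y c ty) (hz : Lin φ g z d tz)
    (h : EE j w x y z = 0) (h0 : EE j a b c d = 0) : dEE j (a:F) b c d tw tx ty tz = 0 := by
  have := lin_EE hg j hw hx hy hz
  rw [h, h0] at this
  exact this.zero hg0

theorem gcd3 {φ : R →+* F} (hv : ∀ a b : R, a ∣ b ∨ b ∣ a) {a b c : R} (ha : φ a = 0)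
    (hb : φ b = 0) (hc : φ c = 0) : (a = 0 ∧ b = 0 ∧ c = 0) ∨
    ∃ g, g ≠ 0 ∧ φ g = 0 ∧ ∃ r s t, a = g*r ∧ b = g*s ∧ c = g*t ∧
      ¬ (φ r = 0 ∧ φ s = 0 ∧ φ t = 0) := by
  have key : ∃ g, φ g = 0 ∧ ∃ r s t, a = g*r ∧ b = g*s ∧ c = g*t ∧
      ¬ (φ r = 0 ∧ φ s = 0 ∧ φ t = 0) := by
    rcases hv a b with ⟨m, rfl⟩ | ⟨m, rfl⟩
    · rcases hv a c with ⟨n, rfl⟩ | ⟨n, rfl⟩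
      · exact ⟨a, ha, 1, m, n, by simp, rfl, rfl, by simp⟩
      · exact ⟨c, hc, n, n*m, 1, rfl, by ring, by simp, by simp⟩
    · rcases hv b c with ⟨n, rfl⟩ | ⟨n, rfl⟩
      · exact ⟨b, hb, m, 1, n, rfl, by simp, rfl, by simp⟩
      · exact ⟨c, hc, n*m, n, 1, by ring, rfl, by simp, by simp⟩
  obtain ⟨g, hg, r, s, t, h1, h2, h3, h4⟩ := key
  by_cases g0 : g = 0
  · left; subst g0; simp_all
  · right; exact ⟨g, g0, hg, r, s, t, h1, h2, h3, h4⟩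

/-- the three linear equations at a smooth point -/
theorem lin_main {φ : R →+* F} {g w x y z : R} (hg : φ g = 0) (hg0 : g ≠ 0) {i j k : ℕ}
    {a b c d : ℤ} {tw tx ty tz : F}
    (hw : Lin φ g w a tw) (hx : Lin φ g x b tx) (hy : Lin φ g y c ty) (hz : Lin φ g z d tz)
    (hi : EE i w x y z = 0) (hj : EE1 j w x y z = 0) (hk : EE2 k w x y z = 0)
    (hi0 : EE i a b c d = 0) (hj0 : EE1 j a b c d = 0) (hk0 : EE2 k a b c d = 0) :
    dEE i (a:F) b c d tw tx ty tz = 0 ∧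
    dEE j ((Gw a b c d : ℤ):F) ((Gx a b c d : ℤ):F) ((Gy a b c d : ℤ):F) ((Gz a b c d : ℤ):F)
      (dGw a b c d tw tx ty tz) (dGx a b c d tw tx ty tz) (dGy a b c d tw tx ty tz)
      (dGz a b c d tw tx ty tz) = 0 ∧
    ∀ a' b' c' d' : ℤ, Gw a b c d = a' → Gx a b c d = b' → Gy a b c d = c' → Gz a b c d = d' →
    ∀ u1 u2 u3 u4 : F, dGw (a:F) b c d tw tx ty tz = u1 → dGx (a:F) b c d tw tx ty tz = u2 →
      dGy (a:F) b c d tw tx ty tz = u3 → dGz (a:F) b c d tw tx ty tz = u4 →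
    dEE k ((Gw a' b' c' d' : ℤ):F) ((Gx a' b' c' d' : ℤ):F) ((Gy a' b' c' d' : ℤ):F)
      ((Gz a' b' c' d' : ℤ):F)
      (dGw a' b' c' d' u1 u2 u3 u4) (dGx a' b' c' d' u1 u2 u3 u4) (dGy a' b' c' d' u1 u2 u3 u4)
      (dGz a' b' c' d' u1 u2 u3 u4) = 0 := by
  obtain ⟨h1, h2, h3, h4⟩ := lin_G hg hw hx hy hz
  obtain ⟨l1, l2, l3, l4⟩ := lin_G hg h1 h2 h3 h4
  refine ⟨lin_EE_zero hg hg0 i hw hx hy hz hi hi0, lin_EE_zero hg hg0 j h1 h2 h3 h4 hj hj0, ?_⟩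
  rintro _ _ _ _ rfl rfl rfl rfl _ _ _ _ rfl rfl rfl rfl
  exact lin_EE_zero hg hg0 k l1 l2 l3 l4 hk hk0

/-- scaled coordinate is 1 -/
theorem Lin.one (φ : R →+* F) (g : R) : Lin φ g 1 1 0 := ⟨0, by simp, by simp⟩
theorem Lin.of {φ : R →+* F} {g x r : R} {n : ℤ} (h : x - (n:R) = g*r) : Lin φ g x n (φ r) :=
  ⟨r, by linear_combination h, rfl⟩

end Local6

section Local7

variable {R F : Type*} [CommRing R] [Field F] [IsDomain R]

theorem sp1 {φ : R →+* F} (hv : ∀ a b : R, a ∣ b ∨ b ∣ a) (hF : Good F)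
    {w y z : R} (hne : w ≠ 0) (hw : φ w = 0) (hy : φ y = -1) (hz : φ z = 1)
    (hi : EE 2 w 1 y z = 0) (hj : EE1 2 w 1 y z = 0) (hk : EE2 0 w 1 y z = 0) : False := by
  have n2 := hF.n2; have n3 := hF.n3
  rcases gcd3 hv
    (by rw [map_sub, map_intCast, hw]; simp : φ (w - ((0:ℤ):R)) = 0)
    (by rw [map_sub, map_intCast, hy]; simp : φ (y - ((-1:ℤ):R)) = 0)
    (by rw [map_sub, map_intCast, hz]; simp : φ (z - ((1:ℤ):R)) = 0) with
    ⟨c1, c2, c3⟩ | ⟨g, g0, hg, r, s, t, c1, c2, c3, hne'⟩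
  · exact hne (by simpa using c1)
  have M := lin_main (i := 2) (j := 2) (k := 0) hg g0 (Lin.of c1) (Lin.one φ g) (Lin.of c2) (Lin.of c3) hi hj hk
    (by norm_num [EE, al, be]) (by norm_num [EE1, EE, al, be, Gw, Gx, Gy, Gz])
    (by norm_num [EE2, EE1, EE, al, be, Gw, Gx, Gy, Gz])
  obtain ⟨e1, e2, e3⟩ := M
  have e3 := e3 1 (-1) 1 0 (by norm_num [Gw]) (by norm_num [Gx]) (by norm_num [Gy])
    (by norm_num [Gz]) _ _ _ _ rfl rfl rfl rfl
  have f1 : 1*φ r + 1*φ s + 2*φ t = 0 := by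
    refine Eq.trans ?_ e1; norm_num [dEE, dGw, dGx, dGy, dGz, Gw, Gx, Gy, Gz, al, be]; try ring
  have f2 : (-1)*φ r + 15*φ s + 6*φ t = 0 := by
    refine Eq.trans ?_ e2; norm_num [dEE, dGw, dGx, dGy, dGz, Gw, Gx, Gy, Gz, al, be]; try ring
  have f3 : 3*φ r + 0*φ s + 0*φ t = 0 := by
    refine Eq.trans ?_ e3; norm_num [dEE, dGw, dGx, dGy, dGz, Gw, Gx, Gy, Gz, al, be]; try ring
  have hd : ((-1) * (2^3 * 3^2) : F) ≠ 0 := mul_ne_zero (by norm_num) (mul_ne_zero (pow_ne_zero 3 n2) (pow_ne_zero 2 n3))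
  refine hne' ⟨(mul_eq_zero.1 (?_ : ((-1) * (2^3 * 3^2) : F) * _ = 0)).resolve_left hd,
    (mul_eq_zero.1 (?_ : ((-1) * (2^3 * 3^2) : F) * _ = 0)).resolve_left hd,
    (mul_eq_zero.1 (?_ : ((-1) * (2^3 * 3^2) : F) * _ = 0)).resolve_left hd⟩
  · linear_combination 0*f1 + 0*f2 + (-24)*f3
  · linear_combination 18*f1 + (-6)*f2 + (-8)*f3
  · linear_combination (-45)*f1 + 3*f2 + 16*f3

theorem sp2 {φ : R →+* F} (hv : ∀ a b : R, a ∣ b ∨ b ∣ a) (hF : Good F)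
    {w y z : R} (hne : w ≠ 0) (hw : φ w = 0) (hy : φ y = -1) (hz : φ z = 1)
    (hi : EE 2 w 1 y z = 0) (hj : EE1 2 w 1 y z = 0) (hk : EE2 2 w 1 y z = 0) : False := by
  have n2 := hF.n2; have n3 := hF.n3
  rcases gcd3 hv
    (by rw [map_sub, map_intCast, hw]; simp : φ (w - ((0:ℤ):R)) = 0)
    (by rw [map_sub, map_intCast, hy]; simp : φ (y - ((-1:ℤ):R)) = 0)
    (by rw [map_sub, map_intCast, hz]; simp : φ (z - ((1:ℤ):R)) = 0) with
    ⟨c1, c2, c3⟩ | ⟨g, g0, hg, r, s, t, c1, c2, c3, hne'⟩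
  · exact hne (by simpa using c1)
  have M := lin_main (i := 2) (j := 2) (k := 2) hg g0 (Lin.of c1) (Lin.one φ g) (Lin.of c2) (Lin.of c3) hi hj hk
    (by norm_num [EE, al, be]) (by norm_num [EE1, EE, al, be, Gw, Gx, Gy, Gz])
    (by norm_num [EE2, EE1, EE, al, be, Gw, Gx, Gy, Gz])
  obtain ⟨e1, e2, e3⟩ := M
  have e3 := e3 1 (-1) 1 0 (by norm_num [Gw]) (by norm_num [Gx]) (by norm_num [Gy])
    (by norm_num [Gz]) _ _ _ _ rfl rfl rfl rfl
  have f1 : 1*φ r + 1*φ s + 2*φ t = 0 := by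
    refine Eq.trans ?_ e1; norm_num [dEE, dGw, dGx, dGy, dGz, Gw, Gx, Gy, Gz, al, be]; try ring
  have f2 : (-1)*φ r + 15*φ s + 6*φ t = 0 := by
    refine Eq.trans ?_ e2; norm_num [dEE, dGw, dGx, dGy, dGz, Gw, Gx, Gy, Gz, al, be]; try ring
  have f3 : 9*φ r + (-15)*φ s + (-6)*φ t = 0 := by
    refine Eq.trans ?_ e3; norm_num [dEE, dGw, dGx, dGy, dGz, Gw, Gx, Gy, Gz, al, be]; try ring
  have hd : ((-1) * (2^6 * 3^1) : F) ≠ 0 := mul_ne_zero (by norm_num) (mul_ne_zero (pow_ne_zero 6 n2) (pow_ne_zero 1 n3))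
  refine hne' ⟨(mul_eq_zero.1 (?_ : ((-1) * (2^6 * 3^1) : F) * _ = 0)).resolve_left hd,
    (mul_eq_zero.1 (?_ : ((-1) * (2^6 * 3^1) : F) * _ = 0)).resolve_left hd,
    (mul_eq_zero.1 (?_ : ((-1) * (2^6 * 3^1) : F) * _ = 0)).resolve_left hd⟩
  · linear_combination 0*f1 + (-24)*f2 + (-24)*f3
  · linear_combination 48*f1 + (-24)*f2 + (-8)*f3
  · linear_combination (-120)*f1 + 24*f2 + 16*f3

theorem sp3 {φ : R →+* F} (hv : ∀ a b : R, a ∣ b ∨ b ∣ a) (hF : Good F)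
    {x y z : R} (hne : y ≠ 0) (hx : φ x = -1) (hy : φ y = 0) (hz : φ z = 1)
    (hi : EE 5 1 x y z = 0) (hj : EE1 2 1 x y z = 0) (hk : EE2 2 1 x y z = 0) : False := by
  have n2 := hF.n2; have n3 := hF.n3
  rcases gcd3 hv
    (by rw [map_sub, map_intCast, hx]; simp : φ (x - ((-1:ℤ):R)) = 0)
    (by rw [map_sub, map_intCast, hy]; simp : φ (y - ((0:ℤ):R)) = 0)
    (by rw [map_sub, map_intCast, hz]; simp : φ (z - ((1:ℤ):R)) = 0) with
    ⟨c1, c2, c3⟩ | ⟨g, g0, hg, r, s, t, c1, c2, c3, hne'⟩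
  · exact hne (by simpa using c2)
  have M := lin_main (i := 5) (j := 2) (k := 2) hg g0 (Lin.one φ g) (Lin.of c1) (Lin.of c2) (Lin.of c3) hi hj hk
    (by norm_num [EE, al, be]) (by norm_num [EE1, EE, al, be, Gw, Gx, Gy, Gz])
    (by norm_num [EE2, EE1, EE, al, be, Gw, Gx, Gy, Gz])
  obtain ⟨e1, e2, e3⟩ := M
  have e3 := e3 (-1) (-1) 1 0 (by norm_num [Gw]) (by norm_num [Gx]) (by norm_num [Gy])
    (by norm_num [Gz]) _ _ _ _ rfl rfl rfl rfl
  have f1 : 0*φ r + (-4)*φ s + 0*φ t = 0 := by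
    refine Eq.trans ?_ e1; norm_num [dEE, dGw, dGx, dGy, dGz, Gw, Gx, Gy, Gz, al, be]; try ring
  have f2 : (-12)*φ r + 1*φ s + (-3)*φ t = 0 := by
    refine Eq.trans ?_ e2; norm_num [dEE, dGw, dGx, dGy, dGz, Gw, Gx, Gy, Gz, al, be]; try ring
  have f3 : (-60)*φ r + (-29)*φ s + (-9)*φ t = 0 := by
    refine Eq.trans ?_ e3; norm_num [dEE, dGw, dGx, dGy, dGz, Gw, Gx, Gy, Gz, al, be]; try ring
  have hd : ((-1) * (2^5 * 3^2) : F) ≠ 0 := mul_ne_zero (by norm_num) (mul_ne_zero (pow_ne_zero 5 n2) (pow_ne_zero 2 n3))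
  refine hne' ⟨(mul_eq_zero.1 (?_ : ((-1) * (2^5 * 3^2) : F) * _ = 0)).resolve_left hd,
    (mul_eq_zero.1 (?_ : ((-1) * (2^5 * 3^2) : F) * _ = 0)).resolve_left hd,
    (mul_eq_zero.1 (?_ : ((-1) * (2^5 * 3^2) : F) * _ = 0)).resolve_left hd⟩
  · linear_combination (-96)*f1 + (-36)*f2 + 12*f3
  · linear_combination 72*f1 + 0*f2 + 0*f3
  · linear_combination 408*f1 + 240*f2 + (-48)*f3

theorem sp4 {φ : R →+* F} (hv : ∀ a b : R, a ∣ b ∨ b ∣ a) (hF : Good F)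
    {x y z : R} (hne : z ≠ 0) (hx : φ x = -1) (hy : φ y = 1) (hz : φ z = 0)
    (hi : EE 2 1 x y z = 0) (hj : EE1 0 1 x y z = 0) (hk : EE2 2 1 x y z = 0) : False := by
  have n2 := hF.n2; have n3 := hF.n3
  rcases gcd3 hv
    (by rw [map_sub, map_intCast, hx]; simp : φ (x - ((-1:ℤ):R)) = 0)
    (by rw [map_sub, map_intCast, hy]; simp : φ (y - ((1:ℤ):R)) = 0)
    (by rw [map_sub, map_intCast, hz]; simp : φ (z - ((0:ℤ):R)) = 0) with
    ⟨c1, c2, c3⟩ | ⟨g, g0, hg, r, s, t, c1, c2, c3, hne'⟩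
  · exact hne (by simpa using c3)
  have M := lin_main (i := 2) (j := 0) (k := 2) hg g0 (Lin.one φ g) (Lin.of c1) (Lin.of c2) (Lin.of c3) hi hj hk
    (by norm_num [EE, al, be]) (by norm_num [EE1, EE, al, be, Gw, Gx, Gy, Gz])
    (by norm_num [EE2, EE1, EE, al, be, Gw, Gx, Gy, Gz])
  obtain ⟨e1, e2, e3⟩ := M
  have e3 := e3 0 1 (-1) 1 (by norm_num [Gw]) (by norm_num [Gx]) (by norm_num [Gy])
    (by norm_num [Gz]) _ _ _ _ rfl rfl rfl rfl
  have f1 : 1*φ r + (-1)*φ s + 1*φ t = 0 := by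
    refine Eq.trans ?_ e1; norm_num [dEE, dGw, dGx, dGy, dGz, Gw, Gx, Gy, Gz, al, be]; try ring
  have f2 : 6*φ r + 3*φ s + 0*φ t = 0 := by
    refine Eq.trans ?_ e2; norm_num [dEE, dGw, dGx, dGy, dGz, Gw, Gx, Gy, Gz, al, be]; try ring
  have f3 : (-15)*φ r + (-9)*φ s + 9*φ t = 0 := by
    refine Eq.trans ?_ e3; norm_num [dEE, dGw, dGx, dGy, dGz, Gw, Gx, Gy, Gz, al, be]; try ring
  have hd : ((1) * (2^3 * 3^2) : F) ≠ 0 := mul_ne_zero (by norm_num) (mul_ne_zero (pow_ne_zero 3 n2) (pow_ne_zero 2 n3))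
  refine hne' ⟨(mul_eq_zero.1 (?_ : ((1) * (2^3 * 3^2) : F) * _ = 0)).resolve_left hd,
    (mul_eq_zero.1 (?_ : ((1) * (2^3 * 3^2) : F) * _ = 0)).resolve_left hd,
    (mul_eq_zero.1 (?_ : ((1) * (2^3 * 3^2) : F) * _ = 0)).resolve_left hd⟩
  · linear_combination 27*f1 + 0*f2 + (-3)*f3
  · linear_combination (-54)*f1 + 24*f2 + 6*f3
  · linear_combination (-9)*f1 + 24*f2 + 9*f3

theorem sp5 {φ : R →+* F} (hv : ∀ a b : R, a ∣ b ∨ b ∣ a) (hF : Good F)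
    {x y z : R} (hne : z ≠ 0) (hx : φ x = -1) (hy : φ y = 1) (hz : φ z = 0)
    (hi : EE 2 1 x y z = 0) (hj : EE1 2 1 x y z = 0) (hk : EE2 2 1 x y z = 0) : False := by
  have n2 := hF.n2; have n3 := hF.n3
  rcases gcd3 hv
    (by rw [map_sub, map_intCast, hx]; simp : φ (x - ((-1:ℤ):R)) = 0)
    (by rw [map_sub, map_intCast, hy]; simp : φ (y - ((1:ℤ):R)) = 0)
    (by rw [map_sub, map_intCast, hz]; simp : φ (z - ((0:ℤ):R)) = 0) with
    ⟨c1, c2, c3⟩ | ⟨g, g0, hg, r, s, t, c1, c2, c3, hne'⟩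
  · exact hne (by simpa using c3)
  have M := lin_main (i := 2) (j := 2) (k := 2) hg g0 (Lin.one φ g) (Lin.of c1) (Lin.of c2) (Lin.of c3) hi hj hk
    (by norm_num [EE, al, be]) (by norm_num [EE1, EE, al, be, Gw, Gx, Gy, Gz])
    (by norm_num [EE2, EE1, EE, al, be, Gw, Gx, Gy, Gz])
  obtain ⟨e1, e2, e3⟩ := M
  have e3 := e3 0 1 (-1) 1 (by norm_num [Gw]) (by norm_num [Gx]) (by norm_num [Gy])
    (by norm_num [Gz]) _ _ _ _ rfl rfl rfl rfl
  have f1 : 1*φ r + (-1)*φ s + 1*φ t = 0 := by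
    refine Eq.trans ?_ e1; norm_num [dEE, dGw, dGx, dGy, dGz, Gw, Gx, Gy, Gz, al, be]; try ring
  have f2 : 15*φ r + 9*φ s + (-1)*φ t = 0 := by
    refine Eq.trans ?_ e2; norm_num [dEE, dGw, dGx, dGy, dGz, Gw, Gx, Gy, Gz, al, be]; try ring
  have f3 : (-15)*φ r + (-9)*φ s + 9*φ t = 0 := by
    refine Eq.trans ?_ e3; norm_num [dEE, dGw, dGx, dGy, dGz, Gw, Gx, Gy, Gz, al, be]; try ring
  have hd : ((1) * (2^6 * 3^1) : F) ≠ 0 := mul_ne_zero (by norm_num) (mul_ne_zero (pow_ne_zero 6 n2) (pow_ne_zero 1 n3))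
  refine hne' ⟨(mul_eq_zero.1 (?_ : ((1) * (2^6 * 3^1) : F) * _ = 0)).resolve_left hd,
    (mul_eq_zero.1 (?_ : ((1) * (2^6 * 3^1) : F) * _ = 0)).resolve_left hd,
    (mul_eq_zero.1 (?_ : ((1) * (2^6 * 3^1) : F) * _ = 0)).resolve_left hd⟩
  · linear_combination 72*f1 + 0*f2 + (-8)*f3
  · linear_combination (-120)*f1 + 24*f2 + 16*f3
  · linear_combination 0*f1 + 24*f2 + 24*f3

theorem sp6 {φ : R →+* F} (hv : ∀ a b : R, a ∣ b ∨ b ∣ a) (hF : Good F) (n17 : (17:F) ≠ 0)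
    {x y z : R} (hne : x ≠ 0) (hx : φ x = 0) (hy : φ y = -1) (hz : φ z = 1)
    (hi : EE 5 1 x y z = 0) (hj : EE1 0 1 x y z = 0) (hk : EE2 2 1 x y z = 0) : False := by
  have n2 := hF.n2; have n3 := hF.n3
  rcases gcd3 hv
    (by rw [map_sub, map_intCast, hx]; simp : φ (x - ((0:ℤ):R)) = 0)
    (by rw [map_sub, map_intCast, hy]; simp : φ (y - ((-1:ℤ):R)) = 0)
    (by rw [map_sub, map_intCast, hz]; simp : φ (z - ((1:ℤ):R)) = 0) with
    ⟨c1, c2, c3⟩ | ⟨g, g0, hg, r, s, t, c1, c2, c3, hne'⟩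
  · exact hne (by simpa using c1)
  have M := lin_main (i := 5) (j := 0) (k := 2) hg g0 (Lin.one φ g) (Lin.of c1) (Lin.of c2) (Lin.of c3) hi hj hk
    (by norm_num [EE, al, be]) (by norm_num [EE1, EE, al, be, Gw, Gx, Gy, Gz])
    (by norm_num [EE2, EE1, EE, al, be, Gw, Gx, Gy, Gz])
  obtain ⟨e1, e2, e3⟩ := M
  have e3 := e3 0 1 (-1) (-1) (by norm_num [Gw]) (by norm_num [Gx]) (by norm_num [Gy])
    (by norm_num [Gz]) _ _ _ _ rfl rfl rfl rfl
  have f1 : (-4)*φ r + 0*φ s + 0*φ t = 0 := by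
    refine Eq.trans ?_ e1; norm_num [dEE, dGw, dGx, dGy, dGz, Gw, Gx, Gy, Gz, al, be]; try ring
  have f2 : 0*φ r + 3*φ s + 0*φ t = 0 := by
    refine Eq.trans ?_ e2; norm_num [dEE, dGw, dGx, dGy, dGz, Gw, Gx, Gy, Gz, al, be]; try ring
  have f3 : (-29)*φ r + (-60)*φ s + (-51)*φ t = 0 := by
    refine Eq.trans ?_ e3; norm_num [dEE, dGw, dGx, dGy, dGz, Gw, Gx, Gy, Gz, al, be]; try ring
  have hd : ((1) * (2^2 * 3^2 * 17^1) : F) ≠ 0 := mul_ne_zero (by norm_num) (mul_ne_zero (mul_ne_zero (pow_ne_zero 2 n2) (pow_ne_zero 2 n3)) (pow_ne_zero 1 n17))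
  refine hne' ⟨(mul_eq_zero.1 (?_ : ((1) * (2^2 * 3^2 * 17^1) : F) * _ = 0)).resolve_left hd,
    (mul_eq_zero.1 (?_ : ((1) * (2^2 * 3^2 * 17^1) : F) * _ = 0)).resolve_left hd,
    (mul_eq_zero.1 (?_ : ((1) * (2^2 * 3^2 * 17^1) : F) * _ = 0)).resolve_left hd⟩
  · linear_combination (-153)*f1 + 0*f2 + 0*f3
  · linear_combination 0*f1 + 204*f2 + 0*f3
  · linear_combination 87*f1 + (-240)*f2 + (-12)*f3

theorem sp7 {φ : R →+* F} (hv : ∀ a b : R, a ∣ b ∨ b ∣ a) (hF : Good F)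
    {x y z : R} (hne : x ≠ 0) (hx : φ x = 0) (hy : φ y = -1) (hz : φ z = 1)
    (hi : EE 5 1 x y z = 0) (hj : EE1 2 1 x y z = 0) (hk : EE2 2 1 x y z = 0) : False := by
  have n2 := hF.n2; have n3 := hF.n3
  rcases gcd3 hv
    (by rw [map_sub, map_intCast, hx]; simp : φ (x - ((0:ℤ):R)) = 0)
    (by rw [map_sub, map_intCast, hy]; simp : φ (y - ((-1:ℤ):R)) = 0)
    (by rw [map_sub, map_intCast, hz]; simp : φ (z - ((1:ℤ):R)) = 0) with
    ⟨c1, c2, c3⟩ | ⟨g, g0, hg, r, s, t, c1, c2, c3, hne'⟩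
  · exact hne (by simpa using c1)
  have M := lin_main (i := 5) (j := 2) (k := 2) hg g0 (Lin.one φ g) (Lin.of c1) (Lin.of c2) (Lin.of c3) hi hj hk
    (by norm_num [EE, al, be]) (by norm_num [EE1, EE, al, be, Gw, Gx, Gy, Gz])
    (by norm_num [EE2, EE1, EE, al, be, Gw, Gx, Gy, Gz])
  obtain ⟨e1, e2, e3⟩ := M
  have e3 := e3 0 1 (-1) (-1) (by norm_num [Gw]) (by norm_num [Gx]) (by norm_num [Gy])
    (by norm_num [Gz]) _ _ _ _ rfl rfl rfl rfl
  have f1 : (-4)*φ r + 0*φ s + 0*φ t = 0 := by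
    refine Eq.trans ?_ e1; norm_num [dEE, dGw, dGx, dGy, dGz, Gw, Gx, Gy, Gz, al, be]; try ring
  have f2 : 1*φ r + (-12)*φ s + (-9)*φ t = 0 := by
    refine Eq.trans ?_ e2; norm_num [dEE, dGw, dGx, dGy, dGz, Gw, Gx, Gy, Gz, al, be]; try ring
  have f3 : (-29)*φ r + (-60)*φ s + (-51)*φ t = 0 := by
    refine Eq.trans ?_ e3; norm_num [dEE, dGw, dGx, dGy, dGz, Gw, Gx, Gy, Gz, al, be]; try ring
  have hd : ((-1) * (2^5 * 3^2) : F) ≠ 0 := mul_ne_zero (by norm_num) (mul_ne_zero (pow_ne_zero 5 n2) (pow_ne_zero 2 n3))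
  refine hne' ⟨(mul_eq_zero.1 (?_ : ((-1) * (2^5 * 3^2) : F) * _ = 0)).resolve_left hd,
    (mul_eq_zero.1 (?_ : ((-1) * (2^5 * 3^2) : F) * _ = 0)).resolve_left hd,
    (mul_eq_zero.1 (?_ : ((-1) * (2^5 * 3^2) : F) * _ = 0)).resolve_left hd⟩
  · linear_combination 72*f1 + 0*f2 + 0*f3
  · linear_combination 312*f1 + 204*f2 + (-36)*f3
  · linear_combination (-408)*f1 + (-240)*f2 + 48*f3

theorem lin_K5 {φ : R →+* F} {g w x y z : R} (hg0 : g ≠ 0)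
    {n : ℤ} {t u : F} (hw : Lin φ g w n t) (hz : Lin φ g z n u) (hx : Lin φ g x 0 0)
    (hy : Lin φ g y 0 0) (h : EE 5 w x y z = 0) : u = t := by
  obtain ⟨a, rfl, rfl⟩ := hw
  obtain ⟨b, rfl, rfl⟩ := hz
  obtain ⟨c, rfl, hc⟩ := hx
  obtain ⟨d, rfl, hd⟩ := hy
  have h : g^2*((b-a)^2 + 4*c*d) = 0 := by
    simp [EE, al, be] at h
    linear_combination h
  have h := (mul_eq_zero.1 h).resolve_left (pow_ne_zero _ hg0)
  have h := congrArg φ h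
  simp [hc] at h
  linear_combination h

theorem sp8 {φ : R →+* F} (hv : ∀ a b : R, a ∣ b ∨ b ∣ a) (hF : Good F) {j : ℕ}
    (hj06 : j = 0 ∨ j = 6)
    {x y z : R} (hx : φ x = -1) (hy : φ y = 1) (hz : φ z = 1)
    (hi : EE 3 1 x y z = 0) (hj : EE1 j 1 x y z = 0) (hk : EE2 5 1 x y z = 0) :
    x = -1 ∧ y = 1 ∧ z = 1 := by
  have n2 := hF.n2; have n3 := hF.n3; have n7 := hF.n7
  rcases gcd3 hv
    (by rw [map_sub, map_intCast, hx]; simp : φ (x - ((-1:ℤ):R)) = 0)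
    (by rw [map_sub, map_intCast, hy]; simp : φ (y - ((1:ℤ):R)) = 0)
    (by rw [map_sub, map_intCast, hz]; simp : φ (z - ((1:ℤ):R)) = 0) with
    ⟨c1, c2, c3⟩ | ⟨g, g0, hg, r, s, t, c1, c2, c3, hne'⟩
  · push_cast at c1 c2 c3
    exact ⟨by linear_combination c1, by linear_combination c2, by linear_combination c3⟩
  exfalso
  obtain ⟨h1, h2, h3, h4⟩ := lin_G hg (Lin.one φ g) (Lin.of c1) (Lin.of c2) (Lin.of c3)
  have e1 := lin_EE_zero hg g0 3 (Lin.one φ g) (Lin.of c1) (Lin.of c2) (Lin.of c3) hi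
    (by norm_num [EE, al, be])
  have e2 := lin_EE_zero hg g0 j h1 h2 h3 h4 hj
    (by rcases hj06 with rfl | rfl <;> norm_num [EE, al, be, Gw, Gx, Gy, Gz])
  have f1 : 2*(φ r*1 + φ t - φ s) = 0 := by
    refine Eq.trans ?_ e1; norm_num [dEE, al, be]; ring
  have f1 := (mul_eq_zero.1 f1).resolve_left n2
  have f2 : 2 * φ r + φ s = 0 := by
    rcases hj06 with rfl | rfl
    · refine (mul_eq_zero.1 (?_ : (3:F) * _ = 0)).resolve_left n3
      refine Eq.trans ?_ e2; norm_num [dEE, dGw]; ring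
    · refine (mul_eq_zero.1 (?_ : (2^3:F) * _ = 0)).resolve_left (pow_ne_zero _ n2)
      norm_num [dEE, dGw, dGx, dGy, dGz, al, be, Gw, Gx, Gy, Gz] at e2
      linear_combination -e2 + 4*f1
  have gw : Gw ((1:ℤ)) (-1) 1 1 = 0 := by norm_num [Gw]
  have gx : Gx ((1:ℤ)) (-1) 1 1 = 2 := by norm_num [Gx]
  have gy : Gy ((1:ℤ)) (-1) 1 1 = 0 := by norm_num [Gy]
  have gz : Gz ((1:ℤ)) (-1) 1 1 = 2 := by norm_num [Gz]
  rw [gw] at h1; rw [gx] at h2; rw [gy] at h3; rw [gz] at h4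
  obtain ⟨l1, l2, l3, l4⟩ := lin_G hg h1 h2 h3 h4
  unfold EE2 EE1 at hk
  generalize Gw (Gw 1 x y z) (Gx 1 x y z) (Gy 1 x y z) (Gz 1 x y z) = w2 at hk l1
  generalize Gx (Gw 1 x y z) (Gx 1 x y z) (Gy 1 x y z) (Gz 1 x y z) = x2 at hk l2
  generalize Gy (Gw 1 x y z) (Gx 1 x y z) (Gy 1 x y z) (Gz 1 x y z) = y2 at hk l3
  generalize Gz (Gw 1 x y z) (Gx 1 x y z) (Gy 1 x y z) (Gz 1 x y z) = z2 at hk l4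
  norm_num [dGw, dGx, dGy, dGz, Gw, Gx, Gy, Gz] at l1 l2 l3 l4
  have s1 : φ s = -2*φ r := by linear_combination f2
  have t1 : φ t = -3*φ r := by linear_combination f1 + f2
  simp only [s1, t1] at l1 l2 l3 l4
  have K := lin_K5 g0 l1 l4 (by convert l2 using 1; ring) (by convert l3 using 1; ring) hk
  have r0 : φ r = 0 := by
    refine (mul_eq_zero.1 (?_ : (2^4*3:F) * _ = 0)).resolve_left
      (mul_ne_zero (pow_ne_zero _ n2) n3)
    linear_combination -K
  exact hne' ⟨r0, by rw [s1, r0]; ring, by rw [t1, r0]; ring⟩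

theorem sp9 {φ : R →+* F} (hv : ∀ a b : R, a ∣ b ∨ b ∣ a) (hF : Good F)
    {x y z : R} (hx : φ x = 1) (hy : φ y = -1) (hz : φ z = 1)
    (hi : EE 3 1 x y z = 0) (hj : EE1 6 1 x y z = 0) (hk : EE2 5 1 x y z = 0) :
    x = 1 ∧ y = -1 ∧ z = 1 := by
  have n2 := hF.n2; have n3 := hF.n3; have n7 := hF.n7
  rcases gcd3 hv
    (by rw [map_sub, map_intCast, hx]; simp : φ (x - ((1:ℤ):R)) = 0)
    (by rw [map_sub, map_intCast, hy]; simp : φ (y - ((-1:ℤ):R)) = 0)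
    (by rw [map_sub, map_intCast, hz]; simp : φ (z - ((1:ℤ):R)) = 0) with
    ⟨c1, c2, c3⟩ | ⟨g, g0, hg, r, s, t, c1, c2, c3, hne'⟩
  · push_cast at c1 c2 c3
    exact ⟨by linear_combination c1, by linear_combination c2, by linear_combination c3⟩
  exfalso
  obtain ⟨h1, h2, h3, h4⟩ := lin_G hg (Lin.one φ g) (Lin.of c1) (Lin.of c2) (Lin.of c3)
  have e1 := lin_EE_zero hg g0 3 (Lin.one φ g) (Lin.of c1) (Lin.of c2) (Lin.of c3) hi
    (by norm_num [EE, al, be])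
  have e2 := lin_EE_zero hg g0 6 h1 h2 h3 h4 hj
    (by norm_num [EE, al, be, Gw, Gx, Gy, Gz])
  have f1 : 2*(φ s*1 + φ t - φ r) = 0 := by
    refine Eq.trans ?_ e1; norm_num [dEE, al, be]; ring
  have f1 := (mul_eq_zero.1 f1).resolve_left n2
  have f2 : 2 * φ r + φ s = 0 := by
    refine (mul_eq_zero.1 (?_ : (2^3:F) * _ = 0)).resolve_left (pow_ne_zero _ n2)
    norm_num [dEE, dGw, dGx, dGy, dGz, al, be, Gw, Gx, Gy, Gz] at e2
    linear_combination -e2 - 4*f1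
  have gw : Gw ((1:ℤ)) 1 (-1) 1 = 2 := by norm_num [Gw]
  have gx : Gx ((1:ℤ)) 1 (-1) 1 = 0 := by norm_num [Gx]
  have gy : Gy ((1:ℤ)) 1 (-1) 1 = 2 := by norm_num [Gy]
  have gz : Gz ((1:ℤ)) 1 (-1) 1 = 0 := by norm_num [Gz]
  rw [gw] at h1; rw [gx] at h2; rw [gy] at h3; rw [gz] at h4
  obtain ⟨l1, l2, l3, l4⟩ := lin_G hg h1 h2 h3 h4
  unfold EE2 EE1 at hk
  generalize Gw (Gw 1 x y z) (Gx 1 x y z) (Gy 1 x y z) (Gz 1 x y z) = w2 at hk l1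
  generalize Gx (Gw 1 x y z) (Gx 1 x y z) (Gy 1 x y z) (Gz 1 x y z) = x2 at hk l2
  generalize Gy (Gw 1 x y z) (Gx 1 x y z) (Gy 1 x y z) (Gz 1 x y z) = y2 at hk l3
  generalize Gz (Gw 1 x y z) (Gx 1 x y z) (Gy 1 x y z) (Gz 1 x y z) = z2 at hk l4
  norm_num [dGw, dGx, dGy, dGz, Gw, Gx, Gy, Gz] at l1 l2 l3 l4
  have s1 : φ s = -2*φ r := by linear_combination f2
  have t1 : φ t = 3*φ r := by linear_combination f1 - f2
  simp only [s1, t1] at l1 l2 l3 l4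
  have K := lin_K5 g0 l1 l4 (by convert l2 using 1; ring) (by convert l3 using 1; ring) hk
  have r0 : φ r = 0 := by
    refine (mul_eq_zero.1 (?_ : (2^4*3:F) * _ = 0)).resolve_left
      (mul_ne_zero (pow_ne_zero _ n2) n3)
    linear_combination K
  exact hne' ⟨r0, by rw [s1, r0]; ring, by rw [t1, r0]; ring⟩

/-- one step of the dynamics near the fixed point `(1,0,0,1)` -/
theorem fix_step {φ : R →+* F} {g w ξ η δ : R} (hg : φ g = 0) (hw : φ w = 1) :
    ∃ w' ξ' η' δ' : R, Gw w (g^2*ξ) (g^4*η) (w+g^3*δ) = w' ∧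
      Gx w (g^2*ξ) (g^4*η) (w+g^3*δ) = g^2*ξ' ∧ Gy w (g^2*ξ) (g^4*η) (w+g^3*δ) = g^4*η' ∧
      Gz w (g^2*ξ) (g^4*η) (w+g^3*δ) = w'+g^3*δ' ∧ φ w' = 1 ∧ φ ξ' = φ ξ ∧
      φ η' = φ ξ ^ 2 + φ η ∧ φ δ' = 3 * φ δ := by
  refine ⟨w^3+2*(g^2*ξ)^3+(g^4*η)^3, w^2*ξ+2*g^6*ξ^2*η+g^6*η^2*(w+g^3*δ),
    w*ξ^2+2*g^6*ξ*η^2+η*(w+g^3*δ)^2, -g^3*ξ^3+g^9*η^3+δ*(3*w^2+3*w*(g^3*δ)+(g^3*δ)^2),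
    ?_, ?_, ?_, ?_, ?_, ?_, ?_, ?_⟩
  · unfold Gw; ring
  · unfold Gx; ring
  · unfold Gy; ring
  · unfold Gz; ring
  · simp [hg, hw, map_ofNat φ]
  · simp [hg, hw, map_ofNat φ]
  · simp [hg, hw, map_ofNat φ]
  · simp [hg, hw, map_ofNat φ]; ring

theorem sp10' {φ : R →+* F} (hu : ∀ x : R, φ x ≠ 0 → IsUnit x)
    (hv : ∀ a b : R, a ∣ b ∨ b ∣ a) (hF : Good F)
    {w x y z : R} (hx0 : x ≠ 0) (hw : φ w = 1) (hx : φ x = 0) (hz : φ z = 1)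
    (hdvd : x ∣ y)
    (hi : EE 5 w x y z = 0) (hj : EE1 5 w x y z = 0) (hk : EE2 5 w x y z = 0) : False := by
  have n2 := hF.n2
  have n4 : (4:F) ≠ 0 := by
    have := mul_ne_zero n2 n2; norm_num at this; exact this
  obtain ⟨B, rfl⟩ := hdvd
  have hi : (z-w)^2 + 4*x^2*B = 0 := by
    simp [EE, al, be] at hi
    linear_combination hi
  obtain ⟨g, hgx⟩ : x ∣ z - w := by
    rcases hv x (z-w) with h | ⟨t, h⟩
    · exact h
    · rw [h] at hi
      have h0 : z - w ≠ 0 := by intro h0; rw [h0, zero_mul] at h; exact hx0 h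
      have h1 : (z-w)^2 * (1 + 4*t^2*B) = 0 := by linear_combination hi
      have h2 := (mul_eq_zero.1 h1).resolve_left (pow_ne_zero _ h0)
      refine ⟨-4*t*B, ?_⟩
      linear_combination (-4*t*B)*h*(-1) + (z-w)*h2
  obtain rfl : z = w + x*g := by linear_combination hgx
  have hB : g^2 + 4*B = 0 := by
    have h1 : x^2 * (g^2+4*B) = 0 := by linear_combination hi
    exact (mul_eq_zero.1 h1).resolve_left (pow_ne_zero _ hx0)
  obtain ⟨u, hu4⟩ := nz_unit hu (x := (4:R)) (by rw [map_ofNat φ]; exact n4)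
  have hB' : B = -g^2*u := by linear_combination u*hB - B*hu4
  subst hB'
  set γ := x*g with hγ
  set B := -g^2*u with hBd
  set X := w^2+2*x^2*B+x*B^2*(w+γ) with hX
  set M := 3*w^2+3*w*γ+γ^2 with hM
  set N := 2*x^2*B+(w+γ)^2 with hN
  have e1 : (g*M - x^2*(1-B^3))^2 + 4*X*(x*w+B*N) = 0 := by
    have h1 : x^2 * ((g*M - x^2*(1-B^3))^2 + 4*X*(x*w+B*N)) = 0 := by
      simp [EE1, EE, al, be, Gw, Gx, Gy, Gz] at hj
      rw [hX, hM, hN, hγ]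
      rw [hγ] at hj
      linear_combination hj
    exact (mul_eq_zero.1 h1).resolve_left (pow_ne_zero _ hx0)
  have hφγ : φ γ = 0 := by rw [hγ, map_mul, hx, zero_mul]
  have hφX : φ X = 1 := by rw [hX]; simp [hx, hw, map_ofNat φ]
  have hφM : φ M = 3 := by rw [hM]; simp [hφγ, hw, map_ofNat φ]
  have hφN : φ N = 1 := by rw [hN]; simp [hx, hφγ, hw, map_ofNat φ]
  have u4 : 4 * φ u = 1 := by have := congrArg φ hu4; simpa [map_ofNat φ] using this
  have hg : φ g = 0 := by
    have := congrArg φ e1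
    simp [hx, hφX, hφM, hφN, hBd, map_ofNat φ] at this
    have h8 : (2*4) * (φ g)^2 = 0 := by linear_combination this + (φ g)^2*u4
    have := (mul_eq_zero.1 h8).resolve_left (mul_ne_zero n2 n4)
    exact pow_eq_zero_iff (two_ne_zero) |>.1 this
  have e2 : x*(4*X*w - 2*g*M*x*(1-B^3) + x^3*(1-B^3)^2) = g^2*(-M^2+X*N) := by
    have : 4*X*B*N = -g^2*X*N := by rw [hBd]; linear_combination (-g^2*X*N)*hu4
    linear_combination e1 - this
  obtain ⟨v, hv4⟩ := nz_unit hu (x := 4*X*w - 2*g*M*x*(1-B^3) + x^3*(1-B^3)^2) (by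
    simp [hx, hφX, hw, map_ofNat φ]; exact n4)
  have v4 : 4 * φ v = 1 := by
    have := congrArg φ hv4
    simpa [hx, hφX, hw, map_ofNat φ] using this
  have e3 : x = g^2*((-M^2+X*N)*v) := by linear_combination v*e2 - x*hv4
  set α := (-M^2+X*N)*v with hα
  have hφα : φ α = -2 := by
    rw [hα]; simp [hφM, hφX, hφN]; linear_combination -2*v4
  have g0 : g ≠ 0 := by rintro rfl; apply hx0; rw [e3]; ring
  have ey : x*B = g^4*(-α*u) := by rw [hBd, e3]; ring
  have ez : γ = g^3*α := by rw [hγ, e3]; ring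
  obtain ⟨w1, ξ1, η1, δ1, a1, a2, a3, a4, b1, b2, b3, b4⟩ :=
    fix_step (g := g) (ξ := α) (η := -α*u) (δ := α) hg hw
  obtain ⟨w2, ξ2, η2, δ2, c1, c2, c3, c4, d1, d2, d3, d4⟩ :=
    fix_step (g := g) (ξ := ξ1) (η := η1) (δ := δ1) hg b1
  unfold EE2 EE1 at hk
  rw [ey, ez, e3, a1, a2, a3, a4, c1, c2, c3, c4] at hk
  have h1 : g^6*(δ2^2 + 4*ξ2*η2) = 0 := by
    simp [EE, al, be] at hk
    linear_combination hk
  have h2 := congrArg φ ((mul_eq_zero.1 h1).resolve_left (pow_ne_zero _ g0))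
  simp only [map_add, map_mul, map_pow, d2, d3, d4, b2, b3, b4, hφα, map_neg, map_ofNat φ,
    map_zero] at h2
  have : (2:F)^8 = 0 := by linear_combination h2 + 4*u4
  exact pow_ne_zero 8 n2 this

theorem sp10 {φ : R →+* F} (hu : ∀ x : R, φ x ≠ 0 → IsUnit x)
    (hv : ∀ a b : R, a ∣ b ∨ b ∣ a) (hF : Good F)
    {x y z : R} (hx0 : x ≠ 0) (hy0 : y ≠ 0) (hx : φ x = 0) (hy : φ y = 0) (hz : φ z = 1)
    (hi : EE 5 1 x y z = 0) (hj : EE1 5 1 x y z = 0) (hk : EE2 5 1 x y z = 0) : False := by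
  have rev : ∀ w x y z : R, EE 5 z y x w = EE 5 w x y z := by
    intro w x y z; simp [EE]; ring
  have grev : ∀ w x y z : R, Gw z y x w = Gz w x y z ∧ Gx z y x w = Gy w x y z ∧
      Gy z y x w = Gx w x y z ∧ Gz z y x w = Gw w x y z := by
    intro w x y z; unfold Gw Gx Gy Gz
    refine ⟨?_, ?_, ?_, ?_⟩ <;> ring
  have rev1 : ∀ w x y z : R, EE1 5 z y x w = EE1 5 w x y z := by
    intro w x y z
    obtain ⟨h1, h2, h3, h4⟩ := grev w x y z
    unfold EE1; rw [h1, h2, h3, h4, rev]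
  have rev2 : ∀ w x y z : R, EE2 5 z y x w = EE2 5 w x y z := by
    intro w x y z
    obtain ⟨h1, h2, h3, h4⟩ := grev w x y z
    unfold EE2; rw [h1, h2, h3, h4, rev1]
  rcases hv x y with h | h
  · exact sp10' hu hv hF hx0 (map_one φ) hx hz h hi hj hk
  · rw [← rev] at hi; rw [← rev1] at hj; rw [← rev2] at hk
    exact sp10' hu hv hF hy0 hz hy (map_one φ) h hi hj hk

end Local7

section Checker

/-! ### A checker evaluated by the kernel -/

/-- evaluate the argument first -/
noncomputable def force (n : ℕ) (f : ℕ → Bool) : Bool :=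
  Nat.rec (motive := fun _ => Bool) false (fun k _ => f k) (Nat.add n 1)
noncomputable def allLt (n : ℕ) (f : ℕ → Bool) : Bool :=
  Nat.rec (motive := fun _ => Bool) true (fun k ih => cond (f k) ih false) n
noncomputable def allL {α : Type} (L : List α) (f : α → Bool) : Bool :=
  List.rec (motive := fun _ => Bool) true (fun a _ ih => cond (f a) ih false) L

theorem force_eq (n : ℕ) (f : ℕ → Bool) : force n f = f n := rfl

theorem cond_tf {a b : Bool} (h : cond a b false = true) : a = true ∧ b = true := by
  cases a <;> simp_all

theorem cond_imp {a b : Bool} (h : cond a b true = true) (ha : a = true) : b = true := by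
  cases a <;> simp_all

theorem allLt_spec {n : ℕ} {f : ℕ → Bool} (h : allLt n f = true) : ∀ k < n, f k = true := by
  induction n with
  | zero => intro k hk; omega
  | succ n ih =>
    obtain ⟨h1, h2⟩ := cond_tf (show cond (f n) (allLt n f) false = true from h)
    intro k hk
    rcases Nat.lt_succ_iff_lt_or_eq.1 hk with hk | rfl
    · exact ih h2 k hk
    · exact h1

theorem allL_spec {α : Type} {L : List α} {f : α → Bool} (h : allL L f = true) :
    ∀ a ∈ L, f a = true := by
  induction L with
  | nil => intro a ha; simp at ha
  | cons b L ih =>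
    obtain ⟨h1, h2⟩ := cond_tf (show cond (f b) (allL L f) false = true from h)
    intro a ha
    rcases List.mem_cons.1 ha with rfl | ha
    · exact h1
    · exact ih h2 a ha

def isZ (l n : ℕ) : Bool := Nat.beq (Nat.mod n l) 0

theorem isZ_iff (l n : ℕ) : isZ l n = true ↔ (n : ZMod l) = 0 := by
  unfold isZ
  rw [Nat.beq_eq, ZMod.natCast_eq_zero_iff]
  exact (Nat.dvd_iff_mod_eq_zero).symm

/-- test a condition of index `j` from its ingredients -/
def tt (l j W S D : ℕ) : Bool :=
  cond (Nat.beq j 0) (isZ l W)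
    (isZ l (cond (Nat.beq j 6) D (Nat.add S (Nat.mul (Nat.pred j) D))))

theorem tt_spec (l j W S D : ℕ)
    (h : (if j = 0 then (W : ZMod l) else (al j : ZMod l) * S + (be j : ZMod l) * D) = 0) :
    tt l j W S D = true := by
  unfold tt
  by_cases h0 : j = 0
  · subst h0; simpa [isZ_iff] using h
  · have e0 : Nat.beq j 0 = false := by
      cases hb : Nat.beq j 0
      · rfl
      · exact absurd (Nat.eq_of_beq_eq_true hb) h0
    rw [e0, cond_false, isZ_iff]
    rw [if_neg h0] at h
    by_cases h6 : j = 6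
    · subst h6; simpa [al, be] using h
    · have e6 : Nat.beq j 6 = false := by
        cases hb : Nat.beq j 6
        · rfl
        · exact absurd (Nat.eq_of_beq_eq_true hb) h6
      rw [e6, cond_false]
      simp only [al, be, if_neg h6] at h
      rw [Nat.add_eq, Nat.mul_eq, Nat.pred_eq_sub_one, Nat.cast_add, Nat.cast_mul]
      simpa using h

noncomputable def fG (l w x y z : ℕ) (f : ℕ → ℕ → ℕ → ℕ → Bool) : Bool :=
  force (Nat.mod (Nat.add (Nat.mul w (Nat.mul w w)) (Nat.add (Nat.mul 2 (Nat.mul x (Nat.mul x x)))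
    (Nat.mul y (Nat.mul y y)))) l) fun a =>
  force (Nat.mod (Nat.add (Nat.mul x (Nat.add (Nat.mul w w) (Nat.mul 2 (Nat.mul x y))))
    (Nat.mul y (Nat.mul y z))) l) fun b =>
  force (Nat.mod (Nat.add (Nat.mul x (Nat.add (Nat.mul w x) (Nat.mul 2 (Nat.mul y y))))
    (Nat.mul y (Nat.mul z z))) l) fun c =>
  force (Nat.mod (Nat.add (Nat.mul x (Nat.mul x x)) (Nat.add (Nat.mul 2 (Nat.mul y (Nat.mul y y)))
    (Nat.mul z (Nat.mul z z)))) l) fun d => f a b c d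

theorem cast_mod (l n : ℕ) : ((Nat.mod n l : ℕ) : ZMod l) = n := ZMod.natCast_mod n l

theorem fG_eq (l w x y z : ℕ) (f : ℕ → ℕ → ℕ → ℕ → Bool) (h : fG l w x y z f = true) :
    ∃ a b c d : ℕ, f a b c d = true ∧ (a : ZMod l) = Gw (w : ZMod l) x y z ∧
      (b : ZMod l) = Gx (w : ZMod l) x y z ∧ (c : ZMod l) = Gy (w : ZMod l) x y z ∧
      (d : ZMod l) = Gz (w : ZMod l) x y z := by
  unfold fG at h
  rw [force_eq, force_eq, force_eq, force_eq] at h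
  refine ⟨_, _, _, _, h, ?_, ?_, ?_, ?_⟩ <;> rw [cast_mod] <;>
    simp only [Nat.add_eq, Nat.mul_eq, Nat.cast_add, Nat.cast_mul, Nat.cast_ofNat, Gw, Gx, Gy, Gz]
      <;> ring

noncomputable def fH (l p q r s : ℕ) (f : ℕ → ℕ → ℕ → ℕ → Bool) : Bool :=
  force (Nat.mod (3*p*r^2+6*q^2*r) l) fun a =>
  force (Nat.mod (5*q*r^2+2*q^2*s+2*p*r*s) l) fun b =>
  force (Nat.mod (2*r^3+6*q*r*s+p*s^2) l) fun c =>
  force (Nat.mod (6*r^2*s+3*q*s^2) l) fun d => f a b c d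

theorem fH_eq (l w x y z : ℕ) (f : ℕ → ℕ → ℕ → ℕ → Bool) (h : fH l w x y z f = true) :
    ∃ a b c d : ℕ, f a b c d = true ∧ (a : ZMod l) = hp (0 : ZMod l) w x y z ∧
      (b : ZMod l) = hq (0 : ZMod l) w x y z ∧ (c : ZMod l) = hr (0 : ZMod l) w x y z ∧
      (d : ZMod l) = hs (0 : ZMod l) w x y z := by
  unfold fH at h
  rw [force_eq, force_eq, force_eq, force_eq] at h
  refine ⟨_, _, _, _, h, ?_, ?_, ?_, ?_⟩ <;> rw [cast_mod] <;>
    simp only [Nat.cast_add, Nat.cast_mul, Nat.cast_pow, Nat.cast_ofNat, hp, hq, hr, hs]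
      <;> ring

/-- `xy - wz` -/
def nD (m w x y z : ℕ) : ℕ := Nat.add (Nat.mul x y) (Nat.mul m (Nat.mul w z))
def nS (w z : ℕ) : ℕ := Nat.mul (Nat.add w z) (Nat.add w z)

noncomputable def ptOK (l m : ℕ) (T : List (ℕ × List ℕ)) (kn : ℕ → ℕ → Bool) (w x y z : ℕ) : Bool :=
  fG l w x y z fun w1 x1 y1 z1 =>
  force (Nat.mod (nS w1 z1) l) fun S => force (Nat.mod (nD m w1 x1 y1 z1) l) fun D =>
  allL T fun p => cond (tt l p.1 w1 S D)
    (fG l w1 x1 y1 z1 fun w2 x2 y2 z2 =>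
      force (Nat.mod (nS w2 z2) l) fun S => force (Nat.mod (nD m w2 x2 y2 z2) l) fun D =>
      allL p.2 fun k => cond (tt l k w2 S D) (kn p.1 k) true) true

theorem tt_EE {l m : ℕ} (hm : (m : ZMod l) = -1) (j w x y z : ℕ)
    (h : EE j (w : ZMod l) x y z = 0) :
    tt l j w (Nat.mod (nS w z) l) (Nat.mod (nD m w x y z) l) = true := by
  apply tt_spec
  rw [cast_mod, cast_mod, nS, nD]
  simp only [Nat.add_eq, Nat.mul_eq, Nat.cast_add, Nat.cast_mul, hm]
  unfold EE at h
  split_ifs at h ⊢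
  · exact h
  · linear_combination h

theorem ptOK_spec {l m : ℕ} (hm : (m : ZMod l) = -1) {T : List (ℕ × List ℕ)} {kn : ℕ → ℕ → Bool}
    {w x y z : ℕ} (h : ptOK l m T kn w x y z = true) {j k : ℕ} {ks : List ℕ} (hj : (j, ks) ∈ T)
    (hk : k ∈ ks) (h1 : EE1 j (w : ZMod l) x y z = 0) (h2 : EE2 k (w : ZMod l) x y z = 0) :
    kn j k = true := by
  unfold ptOK at h
  obtain ⟨w1, x1, y1, z1, h, a1, a2, a3, a4⟩ := fG_eq _ _ _ _ _ _ h
  rw [force_eq, force_eq] at h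
  have h := allL_spec h _ hj
  unfold EE1 at h1
  unfold EE2 EE1 at h2
  rw [← a1, ← a2, ← a3, ← a4] at h1 h2
  have h := cond_imp h (tt_EE hm j w1 x1 y1 z1 h1)
  obtain ⟨w2, x2, y2, z2, h, b1, b2, b3, b4⟩ := fG_eq _ _ _ _ _ _ h
  rw [force_eq, force_eq] at h
  have h := allL_spec h _ hk
  rw [← b1, ← b2, ← b3, ← b4] at h2
  exact cond_imp h (tt_EE hm k w2 x2 y2 z2 h2)

/-- `2(qs - r^2)` -/
def nK (m q r s : ℕ) : ℕ := 2*(q*s+m*r^2)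

noncomputable def hOK (l m : ℕ) (T : List (ℕ × List ℕ)) (kn : ℕ → ℕ → Bool) (w x y z : ℕ) : Bool :=
  fH l w x y z fun w1 x1 y1 z1 =>
  force (Nat.mod (9*y1^2) l) fun S => force (Nat.mod (nK m x1 y1 z1) l) fun D =>
  allL T fun p => cond (tt l p.1 z1 S D)
    (fH l w1 x1 y1 z1 fun w2 x2 y2 z2 =>
      force (Nat.mod (9*y2^2) l) fun S => force (Nat.mod (nK m x2 y2 z2) l) fun D =>
      allL p.2 fun k => cond (tt l k z2 S D) (kn p.1 k) true) true

theorem tt_he {l m : ℕ} (hm : (m : ZMod l) = -1) (j w x y z : ℕ)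
    (h : he j (0 : ZMod l) w x y z = 0) :
    tt l j z (Nat.mod (9*y^2) l) (Nat.mod (nK m x y z) l) = true := by
  apply tt_spec
  rw [cast_mod, cast_mod, nK]
  simp only [Nat.cast_add, Nat.cast_mul, Nat.cast_pow, Nat.cast_ofNat, hm]
  unfold he at h
  split_ifs at h ⊢
  · linear_combination h
  · linear_combination h

theorem hOK_spec {l m : ℕ} (hm : (m : ZMod l) = -1) {T : List (ℕ × List ℕ)} {kn : ℕ → ℕ → Bool}
    {w x y z : ℕ} (h : hOK l m T kn w x y z = true) {j k : ℕ} {ks : List ℕ} (hj : (j, ks) ∈ T)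
    (hk : k ∈ ks) (h1 : he1 j (0 : ZMod l) w x y z = 0) (h2 : he2 k (0 : ZMod l) w x y z = 0) :
    kn j k = true := by
  unfold hOK at h
  obtain ⟨w1, x1, y1, z1, h, a1, a2, a3, a4⟩ := fH_eq _ _ _ _ _ _ h
  rw [force_eq, force_eq] at h
  have h := allL_spec h _ hj
  unfold he1 at h1
  unfold he2 he1 at h2
  rw [← a1, ← a2, ← a3, ← a4] at h1 h2
  have h := cond_imp h (tt_he hm j w1 x1 y1 z1 h1)
  obtain ⟨w2, x2, y2, z2, h, b1, b2, b3, b4⟩ := fH_eq _ _ _ _ _ _ h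
  rw [force_eq, force_eq] at h
  have h := allL_spec h _ hk
  rw [← b1, ← b2, ← b3, ← b4] at h2
  exact cond_imp h (tt_he hm k w2 x2 y2 z2 h2)

end Checker

section Checker2

/-- known points with `w = 1` -/
def knA (l m i x y z j k : ℕ) : Bool :=
  (isZ l (z+1) && isZ l (x*y+1) && (isZ l (x^3+1) || isZ l (x^3+m))) ||
  (Nat.beq i 5 && Nat.beq j 2 && Nat.beq k 2 && isZ l (x+1) && isZ l y && isZ l (z+m)) ||
  (Nat.beq i 2 && (Nat.beq j 0 || Nat.beq j 2) && Nat.beq k 2 &&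
    isZ l (x+1) && isZ l (y+m) && isZ l z) ||
  (Nat.beq i 5 && ((Nat.beq j 0 && !(isZ l 17)) || Nat.beq j 2) && Nat.beq k 2 &&
    isZ l x && isZ l (y+1) && isZ l (z+m)) ||
  (Nat.beq i 3 && (Nat.beq j 0 || Nat.beq j 6) && Nat.beq k 5 &&
    isZ l (x+1) && isZ l (y+m) && isZ l (z+m)) ||
  (Nat.beq i 3 && Nat.beq j 6 && Nat.beq k 5 && isZ l (x+m) && isZ l (y+1) && isZ l (z+m)) ||
  (Nat.beq i 5 && Nat.beq j 5 && Nat.beq k 5 && isZ l x && isZ l y && isZ l (z+m))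

theorem knA_spec {l m i x y z j k : ℕ} (hm : (m : ZMod l) = -1) (h : knA l m i x y z j k = true) :
    ((z : ZMod l) = -1 ∧ (x:ZMod l)*y = -1 ∧ ((x:ZMod l)^3 = 1 ∨ (x:ZMod l)^3 = -1)) ∨
    (i = 5 ∧ j = 2 ∧ k = 2 ∧ (x:ZMod l) = -1 ∧ (y:ZMod l) = 0 ∧ (z:ZMod l) = 1) ∨
    (i = 2 ∧ (j = 0 ∨ j = 2) ∧ k = 2 ∧ (x:ZMod l) = -1 ∧ (y:ZMod l) = 1 ∧ (z:ZMod l) = 0) ∨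
    (i = 5 ∧ ((j = 0 ∧ (17:ZMod l) ≠ 0) ∨ j = 2) ∧ k = 2 ∧
      (x:ZMod l) = 0 ∧ (y:ZMod l) = -1 ∧ (z:ZMod l) = 1) ∨
    (i = 3 ∧ (j = 0 ∨ j = 6) ∧ k = 5 ∧ (x:ZMod l) = -1 ∧ (y:ZMod l) = 1 ∧ (z:ZMod l) = 1) ∨
    (i = 3 ∧ j = 6 ∧ k = 5 ∧ (x:ZMod l) = 1 ∧ (y:ZMod l) = -1 ∧ (z:ZMod l) = 1) ∨
    (i = 5 ∧ j = 5 ∧ k = 5 ∧ (x:ZMod l) = 0 ∧ (y:ZMod l) = 0 ∧ (z:ZMod l) = 1) := by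
  unfold knA at h
  have e17 : (isZ l 17 = false) ↔ (17 : ZMod l) ≠ 0 := by
    rw [← Bool.not_eq_true, isZ_iff]; norm_num
  simp only [Bool.or_eq_true, Bool.and_eq_true, isZ_iff, Nat.beq_eq, Bool.not_eq_true', e17,
    Nat.cast_add, Nat.cast_mul, Nat.cast_pow, Nat.cast_one, hm] at h
  have t1 : ∀ a : ZMod l, a + 1 = 0 → a = -1 := fun a h => by linear_combination h
  have t2 : ∀ a : ZMod l, a + -1 = 0 → a = 1 := fun a h => by linear_combination h
  rcases h with (((((h | h) | h) | h) | h) | h) | h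
  · obtain ⟨⟨h1, h2⟩, h3⟩ := h
    exact Or.inl ⟨t1 _ h1, t1 _ h2, h3.elim (fun h => Or.inr (t1 _ h)) (fun h => Or.inl (t2 _ h))⟩
  · obtain ⟨⟨⟨⟨⟨h1, h2⟩, h3⟩, h4⟩, h5⟩, h6⟩ := h
    exact Or.inr (Or.inl ⟨h1, h2, h3, t1 _ h4, h5, t2 _ h6⟩)
  · obtain ⟨⟨⟨⟨⟨h1, h2⟩, h3⟩, h4⟩, h5⟩, h6⟩ := h
    exact Or.inr (Or.inr (Or.inl ⟨h1, h2, h3, t1 _ h4, t2 _ h5, h6⟩))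
  · obtain ⟨⟨⟨⟨⟨h1, h2⟩, h3⟩, h4⟩, h5⟩, h6⟩ := h
    exact Or.inr (Or.inr (Or.inr (Or.inl ⟨h1, h2, h3, h4, t1 _ h5, t2 _ h6⟩)))
  · obtain ⟨⟨⟨⟨⟨h1, h2⟩, h3⟩, h4⟩, h5⟩, h6⟩ := h
    exact Or.inr (Or.inr (Or.inr (Or.inr (Or.inl ⟨h1, h2, h3, t1 _ h4, t2 _ h5, t2 _ h6⟩))))
  · obtain ⟨⟨⟨⟨⟨h1, h2⟩, h3⟩, h4⟩, h5⟩, h6⟩ := h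
    exact Or.inr (Or.inr (Or.inr (Or.inr (Or.inr (Or.inl
      ⟨h1, h2, h3, t2 _ h4, t1 _ h5, t2 _ h6⟩)))))
  · obtain ⟨⟨⟨⟨⟨h1, h2⟩, h3⟩, h4⟩, h5⟩, h6⟩ := h
    exact Or.inr (Or.inr (Or.inr (Or.inr (Or.inr (Or.inr ⟨h1, h2, h3, h4, h5, t2 _ h6⟩)))))

/-- known point with `w = 0` -/
def knB (l m i y z j k : ℕ) : Bool :=
  Nat.beq i 2 && Nat.beq j 2 && (Nat.beq k 0 || Nat.beq k 2) && isZ l (y+1) && isZ l (z+m)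

theorem knB_spec {l m i y z j k : ℕ} (hm : (m : ZMod l) = -1) (h : knB l m i y z j k = true) :
    i = 2 ∧ j = 2 ∧ (k = 0 ∨ k = 2) ∧ (y:ZMod l) = -1 ∧ (z:ZMod l) = 1 := by
  unfold knB at h
  simp only [Bool.or_eq_true, Bool.and_eq_true, isZ_iff, Nat.beq_eq,
    Nat.cast_add, Nat.cast_one, hm] at h
  obtain ⟨⟨⟨⟨h1, h2⟩, h3⟩, h5⟩, h6⟩ := h
  exact ⟨h1, h2, h3, by linear_combination h5, by linear_combination h6⟩

noncomputable def chkA (l m i : ℕ) (T : List (ℕ × List ℕ)) : Bool :=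
  cond (Nat.beq i 1)
    (allLt l fun x => allLt l fun y => ptOK l m T (knA l m i x y m) 1 x y m)
    (force (Nat.pred i) fun b => allLt l fun x => cond (Nat.beq x 0)
      (allLt l fun z => cond (isZ l (nS 1 z + b*(m*z)))
        (allLt l fun y => ptOK l m T (knA l m i 0 y z) 1 0 y z) true)
      (force (Nat.mod (Nat.pow (Nat.mul b x) (Nat.sub l 2)) l) fun t => allLt l fun z =>
        force (Nat.mod (Nat.mul t (Nat.add (Nat.mul b z) (Nat.mul m (nS 1 z)))) l) fun y =>
          ptOK l m T (knA l m i x y z) 1 x y z))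

noncomputable def chkB (l m i : ℕ) (T : List (ℕ × List ℕ)) : Bool :=
  cond (Nat.beq i 1)
    (allLt l fun y => ptOK l m T (knB l m i y 0) 0 1 y 0)
    (force (Nat.mod (Nat.pow (Nat.pred i) (Nat.sub l 2)) l) fun t => allLt l fun z =>
        force (Nat.mod (Nat.mul t (Nat.mul m (Nat.mul z z))) l) fun y =>
          ptOK l m T (knB l m i y z) 0 1 y z)

def knP (l m i P j k : ℕ) : Bool :=
  Nat.beq i 4 && Nat.beq k 0 && !(Nat.beq j 0) && isZ l (P+m)

noncomputable def chkP (l m i : ℕ) (T : List (ℕ × List ℕ)) : Bool :=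
  cond (Nat.beq i 1)
    (allLt l fun Q => cond (Nat.beq Q 0) true
      (force (Nat.mod (3*m*Q) l) fun P => hOK l m T (fun _ _ => false) P Q 0 1))
    (force (Nat.mod (1 + 9 * m * (2*Nat.pred i)^(l-2)) l) fun q => allLt l fun P =>
      hOK l m T (knP l m i P) P q 1 1)

noncomputable def chkN (l m i : ℕ) (T : List (ℕ × List ℕ)) : Bool :=
  allL T fun p => (Nat.beq i 1 || Nat.beq p.1 0) ||
    !(isZ l (9 * be i * al p.1 + m * (2 * be p.1)))

noncomputable def chk (l m i : ℕ) (T : List (ℕ × List ℕ)) : Bool :=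
  chkA l m i T && chkB l m i T && chkP l m i T && chkN l m i T

variable {l : ℕ} [Fact l.Prime]

theorem fermat {b : ℕ} (hl : 2 ≤ l) (hb : (b : ZMod l) ≠ 0) :
    (b : ZMod l) * (b : ZMod l)^(l-2) = 1 := by
  rw [← pow_succ', show l - 2 + 1 = l - 1 by omega]
  exact ZMod.pow_card_sub_one_eq_one hb

theorem nbeq_false {a b : ℕ} (h : a ≠ b) : Nat.beq a b = false := by
  cases hb : Nat.beq a b
  · rfl
  · exact absurd (Nat.eq_of_beq_eq_true hb) h

theorem nbeq_true {a b : ℕ} (h : a = b) : Nat.beq a b = true := by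
  subst h; exact Nat.beq_refl a

theorem zval (x : ZMod l) : ∃ n < l, (n : ZMod l) = x :=
  ⟨x.val, x.val_lt, ZMod.natCast_zmod_val x⟩

/-- hypotheses common to the soundness statements -/
structure Tab (l m i j k : ℕ) (T : List (ℕ × List ℕ)) : Prop where
  hm : (m : ZMod l) = -1
  hl : 7 < l
  hi1 : 1 ≤ i
  hi5 : i ≤ 5
  hjk : ∃ ks, (j, ks) ∈ T ∧ k ∈ ks

theorem chkA_spec {m i j k : ℕ} {T : List (ℕ × List ℕ)} (hT : Tab l m i j k T)
    (hβ : 2 ≤ i → ((i - 1 : ℕ) : ZMod l) ≠ 0)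
    (h : chkA l m i T = true) {x y z : ZMod l} (e0 : EE i 1 x y z = 0) (e1 : EE1 j 1 x y z = 0)
    (e2 : EE2 k 1 x y z = 0) :
    ∃ x' y' z' : ℕ, (x' : ZMod l) = x ∧ (y' : ZMod l) = y ∧ (z' : ZMod l) = z ∧
      knA l m i x' y' z' j k = true := by
  obtain ⟨ks, hj, hk⟩ := hT.hjk
  have hm := hT.hm
  obtain ⟨x', hx', rfl⟩ := zval x
  unfold chkA at h
  rw [← Nat.cast_one] at e1 e2
  by_cases hi : i = 1
  · subst hi
    obtain ⟨y', hy', rfl⟩ := zval y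
    have hz : z = (m : ZMod l) := by
      rw [hm]; simp [EE, al, be] at e0; linear_combination e0
    subst hz
    have h := allLt_spec (allLt_spec h x' hx') y' hy'
    exact ⟨x', y', m, rfl, rfl, rfl, ptOK_spec hm h hj hk e1 e2⟩
  · rw [nbeq_false hi, cond_false, force_eq] at h
    have hi2 : 2 ≤ i := by have := hT.hi1; omega
    have hβ := hβ hi2
    have h6 : i ≠ 6 := by have := hT.hi5; omega
    have h0 : i ≠ 0 := by omega
    have e0 : (1+z)^2 + ((i-1 : ℕ) : ZMod l) * (x'*y - z) = 0 := by
      simpa [EE, al, be, h6, h0] using e0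
    set b := i - 1 with hb
    have hb' : Nat.pred i = b := rfl
    rw [hb'] at h
    obtain ⟨z', hz', rfl⟩ := zval z
    have h := allLt_spec h x' hx'
    by_cases hx0 : x' = 0
    · subst hx0
      have h := allLt_spec h z' hz'
      obtain ⟨y', hy', rfl⟩ := zval y
      have h := cond_imp h (by
        rw [isZ_iff]; unfold nS
        simp only [Nat.add_eq, Nat.mul_eq, Nat.cast_add, Nat.cast_mul, Nat.cast_one, hm]
        rw [Nat.cast_zero] at e0
        linear_combination e0)
      have h := allLt_spec h y' hy'
      exact ⟨0, y', z', rfl, rfl, rfl, ptOK_spec hm h hj hk e1 e2⟩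
    · rw [nbeq_false hx0, cond_false, force_eq] at h
      have h := allLt_spec h z' hz'
      rw [force_eq] at h
      have hxn : (x' : ZMod l) ≠ 0 := by
        rw [Ne, ZMod.natCast_eq_zero_iff]
        exact Nat.not_dvd_of_pos_of_lt (by omega) hx'
      have hbx : ((b * x' : ℕ) : ZMod l) ≠ 0 := by
        rw [Nat.cast_mul]; exact mul_ne_zero hβ hxn
      have hf := fermat (by have := hT.hl; omega) hbx
      have hy : (((Nat.mod (Nat.mul (Nat.mod (Nat.pow (Nat.mul b x') (Nat.sub l 2)) l)
          (Nat.add (Nat.mul b z') (Nat.mul m (nS 1 z')))) l) : ℕ) : ZMod l) = y := by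
        rw [cast_mod, Nat.mul_eq, Nat.cast_mul, cast_mod, nS]
        simp only [Nat.add_eq, Nat.mul_eq, Nat.cast_add, Nat.cast_mul, Nat.cast_one, hm, Nat.pow_eq,
          Nat.cast_pow, Nat.sub_eq] at hf ⊢
        linear_combination y * hf - ((b:ZMod l)*x')^(l-2) * e0
      exact ⟨x', _, z', rfl, hy, rfl, ptOK_spec hm h hj hk (by rw [hy]; exact e1)
        (by rw [hy]; exact e2)⟩

theorem chkB_spec {m i j k : ℕ} {T : List (ℕ × List ℕ)} (hT : Tab l m i j k T)
    (hβ : 2 ≤ i → ((i - 1 : ℕ) : ZMod l) ≠ 0)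
    (h : chkB l m i T = true) {y z : ZMod l} (e0 : EE i 0 1 y z = 0) (e1 : EE1 j 0 1 y z = 0)
    (e2 : EE2 k 0 1 y z = 0) :
    ∃ y' z' : ℕ, (y' : ZMod l) = y ∧ (z' : ZMod l) = z ∧
      knB l m i y' z' j k = true := by
  obtain ⟨ks, hj, hk⟩ := hT.hjk
  have hm := hT.hm
  unfold chkB at h
  rw [← Nat.cast_one, ← Nat.cast_zero] at e1 e2
  by_cases hi : i = 1
  · subst hi
    obtain ⟨y', hy', rfl⟩ := zval y
    have hz : z = ((0 : ℕ) : ZMod l) := by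
      simp [EE, al, be] at e0; simpa using e0
    subst hz
    have h := allLt_spec h y' hy'
    exact ⟨y', 0, rfl, rfl, ptOK_spec hm h hj hk (by simpa using e1) (by simpa using e2)⟩
  · rw [nbeq_false hi, cond_false, force_eq] at h
    have hi2 : 2 ≤ i := by have := hT.hi1; omega
    have hβ := hβ hi2
    have h6 : i ≠ 6 := by have := hT.hi5; omega
    have h0 : i ≠ 0 := by omega
    have e0 : z^2 + ((i-1 : ℕ) : ZMod l) * y = 0 := by
      simpa [EE, al, be, h6, h0] using e0
    set b := i - 1 with hb
    have hb' : Nat.pred i = b := rfl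
    rw [hb'] at h
    obtain ⟨z', hz', rfl⟩ := zval z
    have h := allLt_spec h z' hz'
    rw [force_eq] at h
    have hf := fermat (by have := hT.hl; omega) hβ
    have hy : (((Nat.mod (Nat.mul (Nat.mod (Nat.pow b (Nat.sub l 2)) l)
          (Nat.mul m (Nat.mul z' z'))) l) : ℕ) : ZMod l) = y := by
      rw [cast_mod, Nat.mul_eq, Nat.cast_mul, cast_mod]
      simp only [Nat.mul_eq, Nat.cast_mul, hm, Nat.pow_eq,
          Nat.cast_pow, Nat.sub_eq]
      linear_combination y * hf - (b:ZMod l)^(l-2) * e0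
    exact ⟨_, z', hy, rfl, ptOK_spec hm h hj hk (by rw [hy]; simpa using e1)
        (by rw [hy]; simpa using e2)⟩

theorem chkP_spec1 {m j k : ℕ} {T : List (ℕ × List ℕ)} (hT : Tab l m 1 j k T)
    (h : chkP l m 1 T = true) (Q : ZMod l) (hQ : Q ≠ 0) (e1 : he1 j 0 (-3*Q) Q 0 1 = 0)
    (e2 : he2 k 0 (-3*Q) Q 0 1 = 0) : False := by
  obtain ⟨ks, hj, hk⟩ := hT.hjk
  have hm := hT.hm
  unfold chkP at h
  obtain ⟨Q', hQ', rfl⟩ := zval Q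
  have h := allLt_spec h Q' hQ'
  have hq0 : Q' ≠ 0 := by rintro rfl; simp at hQ
  simp only [nbeq_false hq0, cond_false, force_eq] at h
  have hp : ((Nat.mod (3*m*Q') l : ℕ) : ZMod l) = -3*Q' := by
    rw [cast_mod]; push_cast; rw [hm]; ring
  have := hOK_spec hm h hj hk (by rw [hp]; simpa using e1) (by rw [hp]; simpa using e2)
  simp at this

theorem chkP_spec2 {m i j k : ℕ} {T : List (ℕ × List ℕ)} (hT : Tab l m i j k T) (hi2 : 2 ≤ i)
    (hβ : ((2 * (i - 1) : ℕ) : ZMod l) ≠ 0)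
    (h : chkP l m i T = true) (P κ : ZMod l) (e0 : he i 0 P κ 1 1 = 0)
    (e1 : he1 j 0 P κ 1 1 = 0)
    (e2 : he2 k 0 P κ 1 1 = 0) : i = 4 ∧ k = 0 ∧ j ≠ 0 ∧ P = 1 := by
  obtain ⟨ks, hj, hk⟩ := hT.hjk
  have hm := hT.hm
  unfold chkP at h
  rw [nbeq_false (show i ≠ 1 by omega), cond_false, force_eq] at h
  obtain ⟨P', hP', rfl⟩ := zval P
  have h := allLt_spec h P' hP'
  have h6 : i ≠ 6 := by have := hT.hi5; omega
  have h0 : i ≠ 0 := by omega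
  have e0 : 9 + ((2 * (i - 1) : ℕ) : ZMod l) * (κ - 1) = 0 := by
    simp [he, al, be, h6, h0] at e0
    push_cast
    linear_combination e0
  have hf := fermat (by have := hT.hl; omega) hβ
  have hq : ((Nat.mod (1 + 9 * m * (2*Nat.pred i)^(l-2)) l : ℕ) : ZMod l) = κ := by
    rw [cast_mod, Nat.pred_eq_sub_one]
    generalize 2 * (i-1) = b at *
    push_cast
    rw [hm]
    linear_combination (κ-1) * hf - (b:ZMod l)^(l-2) * e0
  have := hOK_spec hm h hj hk (by rw [hq]; simpa using e1) (by rw [hq]; simpa using e2)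
  unfold knP at this
  simp only [Bool.and_eq_true, isZ_iff, Nat.beq_eq, Nat.cast_add, hm] at this
  obtain ⟨⟨⟨h1, h2⟩, h3⟩, h4⟩ := this
  refine ⟨h1, h2, ?_, by linear_combination h4⟩
  rintro rfl
  simp at h3

theorem chkN_spec {m i j k : ℕ} {T : List (ℕ × List ℕ)} (hT : Tab l m i j k T) (hi2 : 2 ≤ i)
    (h : chkN l m i T = true) (hj0 : j ≠ 0) :
    9 * (be i : ZMod l) * (al j : ZMod l) - 2*(be j : ZMod l) ≠ 0 := by
  obtain ⟨ks, hj, hk⟩ := hT.hjk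
  have hm := hT.hm
  have h := allL_spec h _ hj
  simp only [nbeq_false (show i ≠ 1 by omega), nbeq_false hj0, Bool.or_false, Bool.false_or,
    Bool.not_eq_true', ← Bool.not_eq_true, isZ_iff] at h
  intro h'
  apply h
  push_cast
  rw [hm]
  linear_combination h'

end Checker2

section Tables

def tab11_1 : List (ℕ × List ℕ) :=
  [(0, [2, 3]), (4, [0]), (5, [0]), (6, [0])]

theorem ok11_1 : chk 11 10 1 tab11_1 = true := by
  decide +kernel

def tab11_2 : List (ℕ × List ℕ) :=
  [(0, [2, 5, 6]), (1, [0, 2, 3, 6]), (2, [3, 4, 6]), (3, [0, 1, 2, 3, 4, 5, 6]), (4, [0, 1, 2, 3, 4, 5, 6]), (5, [0, 4, 5]), (6, [0, 1, 2, 3, 4, 5, 6])]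

theorem ok11_2 : chk 11 10 2 tab11_2 = true := by
  decide +kernel

def tab11_3 : List (ℕ × List ℕ) :=
  [(0, [3, 4]), (1, [1, 2, 3, 5]), (2, [0, 2, 3, 4, 6]), (3, [1, 2, 4, 5, 6]), (4, [1, 2, 5, 6]), (5, [0, 1, 2, 3, 4, 6]), (6, [1, 2, 3, 4, 5])]

theorem ok11_3 : chk 11 10 3 tab11_3 = true := by
  decide +kernel

def tab11_4 : List (ℕ × List ℕ) :=
  [(0, [0, 2, 3, 4, 5, 6]), (1, [1, 2, 4, 6]), (2, [0, 1, 2, 3, 4, 5, 6]), (3, [0, 2, 3, 4, 5]), (4, [0, 1, 3, 4, 5, 6]), (5, [1, 2, 4, 5]), (6, [0, 2, 3, 4])]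

theorem ok11_4 : chk 11 10 4 tab11_4 = true := by
  decide +kernel

def tab11_5 : List (ℕ × List ℕ) :=
  [(0, [0, 3, 4, 5, 6]), (1, [1, 2, 3, 6]), (2, [3, 4, 5, 6]), (3, [1, 3, 4, 5]), (4, [1, 3, 5, 6]), (5, [1, 4, 5, 6]), (6, [2, 3, 4, 6])]

theorem ok11_5 : chk 11 10 5 tab11_5 = true := by
  decide +kernel

def tab13_1 : List (ℕ × List ℕ) :=
  [(0, [0, 4, 6]), (2, [1, 2, 3, 4, 5]), (3, [1, 3, 4, 6]), (4, [2, 4, 5, 6]), (5, [1, 2, 3, 4, 6]), (6, [1, 2, 4, 5])]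

theorem ok13_1 : chk 13 12 1 tab13_1 = true := by
  decide +kernel

def tab13_2 : List (ℕ × List ℕ) :=
  [(0, [0, 1, 4]), (1, [1, 4, 5]), (5, [2, 6])]

theorem ok13_2 : chk 13 12 2 tab13_2 = true := by
  decide +kernel

def tab13_3 : List (ℕ × List ℕ) :=
  [(0, [0, 1, 6]), (1, [0]), (2, [1, 5]), (3, [0]), (4, [0, 3]), (5, [5]), (6, [0, 6])]

theorem ok13_3 : chk 13 12 3 tab13_3 = true := by
  decide +kernel

def tab13_4 : List (ℕ × List ℕ) :=
  [(1, [0, 3, 5]), (4, [2]), (5, [0, 3, 6]), (6, [1, 5])]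

theorem ok13_4 : chk 13 12 4 tab13_4 = true := by
  decide +kernel

def tab13_5 : List (ℕ × List ℕ) :=
  [(0, [1]), (1, [0, 5]), (2, [0, 1]), (3, [0, 2, 6]), (4, [0, 2]), (5, [0, 2, 3]), (6, [0, 1, 5])]

theorem ok13_5 : chk 13 12 5 tab13_5 = true := by
  decide +kernel

def tab17_2 : List (ℕ × List ℕ) :=
  [(2, [0])]

theorem ok17_2 : chk 17 16 2 tab17_2 = true := by
  decide +kernel

def tab17_3 : List (ℕ × List ℕ) :=
  [(0, [2, 5]), (4, [4])]

theorem ok17_3 : chk 17 16 3 tab17_3 = true := by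
  decide +kernel

def tab17_4 : List (ℕ × List ℕ) :=
  [(0, [1]), (3, [1, 6])]

theorem ok17_4 : chk 17 16 4 tab17_4 = true := by
  decide +kernel

def tab17_5 : List (ℕ × List ℕ) :=
  [(1, [4]), (4, [4])]

theorem ok17_5 : chk 17 16 5 tab17_5 = true := by
  decide +kernel

def tab19_1 : List (ℕ × List ℕ) :=
  [(0, [5]), (2, [0]), (3, [0])]

theorem ok19_1 : chk 19 18 1 tab19_1 = true := by
  decide +kernel

def tab19_2 : List (ℕ × List ℕ) :=
  [(0, [3]), (2, [1]), (5, [3])]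

theorem ok19_2 : chk 19 18 2 tab19_2 = true := by
  decide +kernel

def tab19_3 : List (ℕ × List ℕ) :=
  [(1, [4, 6]), (3, [3])]

theorem ok19_3 : chk 19 18 3 tab19_3 = true := by
  decide +kernel

def tab19_4 : List (ℕ × List ℕ) :=
  [(6, [6])]

theorem ok19_4 : chk 19 18 4 tab19_4 = true := by
  decide +kernel

def tab23_1 : List (ℕ × List ℕ) :=
  [(2, [6]), (3, [2, 5]), (4, [1, 3]), (6, [3])]

theorem ok23_1 : chk 23 22 1 tab23_1 = true := by
  decide +kernel

def tab23_5 : List (ℕ × List ℕ) :=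
  [(0, [2])]

theorem ok23_5 : chk 23 22 5 tab23_5 = true := by
  decide +kernel

def tab29_1 : List (ℕ × List ℕ) :=
  [(5, [5])]

theorem ok29_1 : chk 29 28 1 tab29_1 = true := by
  decide +kernel

def tab31_2 : List (ℕ × List ℕ) :=
  [(5, [1])]

theorem ok31_2 : chk 31 30 2 tab31_2 = true := by
  decide +kernel

def tab37_2 : List (ℕ × List ℕ) :=
  [(2, [5])]

theorem ok37_2 : chk 37 36 2 tab37_2 = true := by
  decide +kernel

def tab61_1 : List (ℕ × List ℕ) :=
  [(6, [6])]

theorem ok61_1 : chk 61 60 1 tab61_1 = true := by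
  decide +kernel

def tab71_5 : List (ℕ × List ℕ) :=
  [(2, [2])]

theorem ok71_5 : chk 71 70 5 tab71_5 = true := by
  decide +kernel

def tab83_2 : List (ℕ × List ℕ) :=
  [(2, [2])]

theorem ok83_2 : chk 83 82 2 tab83_2 = true := by
  decide +kernel

def tab113_1 : List (ℕ × List ℕ) :=
  [(0, [1])]

theorem ok113_1 : chk 113 112 1 tab113_1 = true := by
  decide +kernel

end Tables

section Scaling

variable {R F : Type*} [CommRing R] [Field F]

theorem EE_smul (j : ℕ) (g w x y z : R) :
    EE j (g*w) (g*x) (g*y) (g*z) = g^(if j = 0 then 1 else 2) * EE j w x y z := by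
  unfold EE; split_ifs <;> ring

theorem G_smul (g w x y z : R) :
    Gw (g*w) (g*x) (g*y) (g*z) = g^3 * Gw w x y z ∧ Gx (g*w) (g*x) (g*y) (g*z) = g^3 * Gx w x y z ∧
    Gy (g*w) (g*x) (g*y) (g*z) = g^3 * Gy w x y z ∧
    Gz (g*w) (g*x) (g*y) (g*z) = g^3 * Gz w x y z := by
  unfold Gw Gx Gy Gz
  refine ⟨?_, ?_, ?_, ?_⟩ <;> ring

theorem EE1_smul (j : ℕ) (g w x y z : R) :
    EE1 j (g*w) (g*x) (g*y) (g*z) = (g^3)^(if j = 0 then 1 else 2) * EE1 j w x y z := by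
  obtain ⟨h1, h2, h3, h4⟩ := G_smul g w x y z
  unfold EE1
  rw [h1, h2, h3, h4, EE_smul]

theorem EE2_smul (j : ℕ) (g w x y z : R) :
    EE2 j (g*w) (g*x) (g*y) (g*z) = ((g^3)^3)^(if j = 0 then 1 else 2) * EE2 j w x y z := by
  obtain ⟨h1, h2, h3, h4⟩ := G_smul g w x y z
  unfold EE2
  rw [h1, h2, h3, h4, EE1_smul]

/-- the three conditions simultaneously -/
def Sys (i j k : ℕ) (w x y z : R) : Prop :=
  EE i w x y z = 0 ∧ EE1 j w x y z = 0 ∧ EE2 k w x y z = 0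

theorem Sys.smul {i j k : ℕ} {w x y z : R} (h : Sys i j k w x y z) (g : R) :
    Sys i j k (g*w) (g*x) (g*y) (g*z) := by
  obtain ⟨h0, h1, h2⟩ := h
  refine ⟨?_, ?_, ?_⟩
  · rw [EE_smul, h0, mul_zero]
  · rw [EE1_smul, h1, mul_zero]
  · rw [EE2_smul, h2, mul_zero]

theorem Sys.unsmul [IsDomain R] {i j k : ℕ} {g w x y z : R} (hg : g ≠ 0)
    (h : Sys i j k (g*w) (g*x) (g*y) (g*z)) : Sys i j k w x y z := by
  obtain ⟨h0, h1, h2⟩ := h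
  rw [EE_smul] at h0
  rw [EE1_smul] at h1
  rw [EE2_smul] at h2
  exact ⟨(mul_eq_zero.1 h0).resolve_left (pow_ne_zero _ hg),
    (mul_eq_zero.1 h1).resolve_left (pow_ne_zero _ (pow_ne_zero _ hg)),
    (mul_eq_zero.1 h2).resolve_left (pow_ne_zero _ (pow_ne_zero _ (pow_ne_zero _ hg)))⟩

variable {S : Type*} [CommRing S]

theorem map_EE (φ : R →+* S) (j : ℕ) (w x y z : R) :
    φ (EE j w x y z) = EE j (φ w) (φ x) (φ y) (φ z) := by
  unfold EE; split_ifs <;> simp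

theorem map_EE1 (φ : R →+* S) (j : ℕ) (w x y z : R) :
    φ (EE1 j w x y z) = EE1 j (φ w) (φ x) (φ y) (φ z) := by
  unfold EE1; rw [map_EE]; unfold Gw Gx Gy Gz; simp [map_ofNat φ]

theorem map_EE2 (φ : R →+* S) (j : ℕ) (w x y z : R) :
    φ (EE2 j w x y z) = EE2 j (φ w) (φ x) (φ y) (φ z) := by
  unfold EE2; rw [map_EE1]; unfold Gw Gx Gy Gz; simp [map_ofNat φ]

theorem Sys.map {i j k : ℕ} {w x y z : R} (h : Sys i j k w x y z) (φ : R →+* S) :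
    Sys i j k (φ w) (φ x) (φ y) (φ z) := by
  obtain ⟨h0, h1, h2⟩ := h
  refine ⟨?_, ?_, ?_⟩
  · rw [← map_EE, h0, map_zero]
  · rw [← map_EE1, h1, map_zero]
  · rw [← map_EE2, h2, map_zero]

theorem Sys.of_map {i j k : ℕ} {w x y z : R} (φ : R →+* S) (hφ : Function.Injective φ)
    (h : Sys i j k (φ w) (φ x) (φ y) (φ z)) : Sys i j k w x y z := by
  obtain ⟨h0, h1, h2⟩ := h
  refine ⟨hφ ?_, hφ ?_, hφ ?_⟩
  · rw [map_EE, h0, map_zero]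
  · rw [map_EE1, h1, map_zero]
  · rw [map_EE2, h2, map_zero]

theorem gcd4 (hv : ∀ a b : R, a ∣ b ∨ b ∣ a) (w x y z : R) :
    ∃ g ∈ ({w, x, y, z} : Set R), g ∣ w ∧ g ∣ x ∧ g ∣ y ∧ g ∣ z := by
  obtain ⟨g, hg, g1, g2⟩ : ∃ g ∈ ({w, x} : Set R), g ∣ w ∧ g ∣ x := by
    rcases hv w x with h | h
    · exact ⟨w, by simp, dvd_rfl, h⟩
    · exact ⟨x, by simp, h, dvd_rfl⟩
  obtain ⟨g', hg', g3, g4⟩ : ∃ g ∈ ({y, z} : Set R), g ∣ y ∧ g ∣ z := by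
    rcases hv y z with h | h
    · exact ⟨y, by simp, dvd_rfl, h⟩
    · exact ⟨z, by simp, h, dvd_rfl⟩
  rcases hv g g' with h | h
  · refine ⟨g, ?_, g1, g2, h.trans g3, h.trans g4⟩
    rcases hg with rfl | rfl <;> simp
  · refine ⟨g', ?_, h.trans g1, h.trans g2, g3, g4⟩
    rcases hg' with rfl | rfl <;> simp

end Scaling

section LocalMain

variable {l : ℕ} [Fact l.Prime]

theorem good_of (hl : 7 < l) : Good (ZMod l) := by
  have key : ∀ n : ℕ, 0 < n → n < l → ((n : ℕ) : ZMod l) ≠ 0 := by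
    intro n h0 h1
    rw [Ne, ZMod.natCast_eq_zero_iff]
    exact Nat.not_dvd_of_pos_of_lt h0 h1
  refine ⟨?_, ?_, ?_, ?_⟩
  · exact_mod_cast key 2 (by omega) (by omega)
  · exact_mod_cast key 3 (by omega) (by omega)
  · exact_mod_cast key 5 (by omega) (by omega)
  · exact_mod_cast key 7 (by omega) (by omega)

theorem pad_hu (x : ℤ_[l]) (h : PadicInt.toZMod x ≠ 0) : IsUnit x := by
  by_contra hx
  apply h
  rw [← RingHom.mem_ker, PadicInt.ker_toZMod]
  exact hx

theorem pad_hv (a b : ℤ_[l]) : a ∣ b ∨ b ∣ a := ValuationRing.dvd_total a b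

theorem pad_norm_lt {x : ℤ_[l]} : PadicInt.toZMod x = 0 ↔ ‖x‖ < 1 := by
  rw [← RingHom.mem_ker, PadicInt.ker_toZMod, IsLocalRing.mem_maximalIdeal, mem_nonunits_iff,
    PadicInt.not_isUnit_iff]

theorem pad_hω (hl : 7 < l) (o : ZMod l) (ho : o^3 = 1) :
    ∃ ω : ℤ_[l], ω^3 = 1 ∧ PadicInt.toZMod ω = o := by
  obtain ⟨a, ha⟩ : ∃ a : ℤ_[l], PadicInt.toZMod a = o :=
    ⟨(o.val : ℤ_[l]), by rw [map_natCast, ZMod.natCast_zmod_val]⟩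
  have hF := good_of hl
  have ho0 : o ≠ 0 := by rintro rfl; norm_num at ho
  have hd : ‖(3 * a^2 : ℤ_[l])‖ = 1 := by
    rw [← PadicInt.isUnit_iff]
    apply pad_hu
    rw [map_mul, map_pow, ha, map_ofNat]
    exact mul_ne_zero hF.n3 (pow_ne_zero _ ho0)
  have h1 : ‖(a^3 - 1 : ℤ_[l])‖ < 1 := by
    rw [← pad_norm_lt, map_sub, map_pow, ha, ho, map_one, sub_self]
  have ed : (Polynomial.derivative (Polynomial.X^3 - 1 : Polynomial ℤ_[l])).aeval a = 3*a^2 := by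
    simp; left; norm_num
  obtain ⟨z, hz, hz', -⟩ := hensels_lemma (p := l) (F := (Polynomial.X^3 - 1 : Polynomial ℤ_[l]))
    (a := a) (by rw [ed, hd]; simpa using h1)
  rw [ed, hd] at hz'
  refine ⟨z, ?_, ?_⟩
  · have : z^3 - 1 = 0 := by simpa using hz
    linear_combination this
  · rw [← pad_norm_lt, map_sub, ha] at hz'
    linear_combination hz'

theorem coreA {m i j k : ℕ} {T : List (ℕ × List ℕ)} (hT : Tab l m i j k T)
    (hc : chk l m i T = true) (hij : ¬ (i = 1 ∧ j = 1)) (hj6 : j ≤ 6) (hk6 : k ≤ 6)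
    {x y z : ℤ_[l]} (hx : x ≠ 0) (hy : y ≠ 0) (hz : z ≠ 0) (h : Sys i j k 1 x y z) :
    (1 + z = 0 ∧ x^3+y^3 = 0) ∨ (x = -1 ∧ y = 1 ∧ z = 1) ∨ (x = 1 ∧ y = -1 ∧ z = 1) := by
  unfold chk at hc
  simp only [Bool.and_eq_true] at hc
  obtain ⟨⟨⟨hA, hB⟩, hP⟩, hN⟩ := hc
  have hi1 := hT.hi1
  have hi5 := hT.hi5
  have hl := hT.hl
  have hF := good_of hl
  have key : ∀ n : ℕ, 0 < n → n ≤ 8 → ((n : ℕ) : ZMod l) ≠ 0 := by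
    intro n h0 h1
    rw [Ne, ZMod.natCast_eq_zero_iff]
    intro hd
    have := Nat.le_of_dvd h0 hd
    have : l = 8 := by omega
    have hp := Fact.out (p := l.Prime)
    rw [this] at hp
    norm_num at hp
  have hs := h.map (PadicInt.toZMod (p := l))
  rw [map_one] at hs
  obtain ⟨e0, e1, e2⟩ := h
  obtain ⟨f0, f1, f2⟩ := hs
  obtain ⟨x', y', z', hx', hy', hz', hk⟩ :=
    chkA_spec hT (fun _ => key _ (by omega) (by omega)) hA f0 f1 f2
  have hk := knA_spec hT.hm hk
  rw [hx', hy', hz'] at hk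
  have hu := pad_hu (l := l)
  have hv := pad_hv (l := l)
  rcases hk with h | h | h | h | h | h | h
  · obtain ⟨a1, a2, a3⟩ := h
    left
    refine pt0 hu hv hF (pad_hω hl) hi1 hi5 hij hj6 hk6 ?_ ?_ ?_ a1 a2 a3 e0 e1 e2
    · intro hi2 P κ g0 g1 g2
      exact chkP_spec2 hT hi2 (key _ (by omega) (by omega)) hP P κ g0 g1 g2
    · intro hi Q hQ g1 g2
      subst hi
      exact chkP_spec1 hT hP Q hQ g1 g2
    · intro hi2 hj0
      exact chkN_spec hT hi2 hN hj0
  · obtain ⟨rfl, rfl, rfl, a1, a2, a3⟩ := h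
    exact (sp3 hv hF hy a1 a2 a3 e0 e1 e2).elim
  · obtain ⟨rfl, rfl | rfl, rfl, a1, a2, a3⟩ := h
    · exact (sp4 hv hF hz a1 a2 a3 e0 e1 e2).elim
    · exact (sp5 hv hF hz a1 a2 a3 e0 e1 e2).elim
  · obtain ⟨rfl, ⟨rfl, n17⟩ | rfl, rfl, a1, a2, a3⟩ := h
    · exact (sp6 hv hF n17 hx a1 a2 a3 e0 e1 e2).elim
    · exact (sp7 hv hF hx a1 a2 a3 e0 e1 e2).elim
  · obtain ⟨rfl, hj06, rfl, a1, a2, a3⟩ := h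
    exact Or.inr (Or.inl (sp8 hv hF hj06 a1 a2 a3 e0 e1 e2))
  · obtain ⟨rfl, rfl, rfl, a1, a2, a3⟩ := h
    exact Or.inr (Or.inr (sp9 hv hF a1 a2 a3 e0 e1 e2))
  · obtain ⟨rfl, rfl, rfl, a1, a2, a3⟩ := h
    exact (sp10 hu hv hF hx hy a1 a2 a3 e0 e1 e2).elim

theorem coreB {m i j k : ℕ} {T : List (ℕ × List ℕ)} (hT : Tab l m i j k T)
    (hc : chk l m i T = true)
    {w y z : ℤ_[l]} (hw : w ≠ 0) (hw0 : PadicInt.toZMod w = 0)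
    (h : Sys i j k w 1 y z) : False := by
  unfold chk at hc
  simp only [Bool.and_eq_true] at hc
  obtain ⟨⟨⟨hA, hB⟩, hP⟩, hN⟩ := hc
  have hi1 := hT.hi1
  have hi5 := hT.hi5
  have hl := hT.hl
  have hF := good_of hl
  have key : ∀ n : ℕ, 0 < n → n ≤ 7 → ((n : ℕ) : ZMod l) ≠ 0 := by
    intro n h0 h1
    rw [Ne, ZMod.natCast_eq_zero_iff]
    intro hd
    have := Nat.le_of_dvd h0 hd
    omega
  have hs := h.map (PadicInt.toZMod (p := l))
  rw [map_one, hw0] at hs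
  obtain ⟨e0, e1, e2⟩ := h
  obtain ⟨f0, f1, f2⟩ := hs
  obtain ⟨y', z', hy', hz', hk⟩ :=
    chkB_spec hT (fun _ => key _ (by omega) (by omega)) hB f0 f1 f2
  have hk := knB_spec hT.hm hk
  rw [hy', hz'] at hk
  have hv := pad_hv (l := l)
  obtain ⟨rfl, rfl, rfl | rfl, a2, a3⟩ := hk
  · exact sp1 hv hF hw hw0 a2 a3 e0 e1 e2
  · exact sp2 hv hF hw hw0 a2 a3 e0 e1 e2

theorem coreC {i j k : ℕ} (hl : 7 < l) (hi1 : 1 ≤ i) (hi5 : i ≤ 5) (hj6 : j ≤ 6)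
    {y z : ZMod l} (h : Sys i j k 0 0 y z) : y = 0 ∧ z = 0 := by
  have hF := good_of hl
  obtain ⟨h0, h1, -⟩ := h
  have h6 : i ≠ 6 := by omega
  have h0' : i ≠ 0 := by omega
  have hz : z = 0 := by simpa [EE, al, be, h6, h0'] using h0
  refine ⟨?_, hz⟩
  subst hz
  by_contra hy
  by_cases hj0 : j = 0
  · subst hj0
    simp [EE1, EE, Gw] at h1
    exact hy h1
  · apply hF.nine hj0 hj6
    have h1 : (9 * (al j : ZMod l) - 2 * (be j : ZMod l)) * y^6 = 0 := by
      simp only [EE1, EE, Gw, Gx, Gy, Gz, if_neg hj0] at h1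
      linear_combination h1
    exact (mul_eq_zero.1 h1).resolve_right (pow_ne_zero _ hy)

/-- the local statement -/
theorem local_main {m i j k : ℕ} {T : List (ℕ × List ℕ)} (hT : Tab l m i j k T)
    (hc : chk l m i T = true) (hij : ¬ (i = 1 ∧ j = 1)) (hj6 : j ≤ 6) (hk6 : k ≤ 6)
    {w x y z : ℤ_[l]} (hw : w ≠ 0) (hx : x ≠ 0) (hy : y ≠ 0) (hz : z ≠ 0)
    (h : Sys i j k w x y z) :
    (w + z = 0 ∧ x^3+y^3 = 0) ∨ (x = -w ∧ y = w ∧ z = w) ∨ (x = w ∧ y = -w ∧ z = w) := by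
  have hu := pad_hu (l := l)
  have hv := pad_hv (l := l)
  have hl := hT.hl
  obtain ⟨g, hg, ⟨W, rfl⟩, ⟨X, rfl⟩, ⟨Y, rfl⟩, ⟨Z, rfl⟩⟩ := gcd4 hv w x y z
  have hg0 : g ≠ 0 := left_ne_zero_of_mul hw
  have hW := right_ne_zero_of_mul hw
  have hX := right_ne_zero_of_mul hx
  have hY := right_ne_zero_of_mul hy
  have hZ := right_ne_zero_of_mul hz
  have h := Sys.unsmul hg0 h
  have h1 : W = 1 ∨ X = 1 ∨ Y = 1 ∨ Z = 1 := by
    have e : ∀ a : ℤ_[l], g = g * a → a = 1 := fun a ha =>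
      mul_left_cancel₀ hg0 (by rw [← ha, mul_one])
    rcases hg with hg | hg | hg | hg
    · exact Or.inl (e _ hg)
    · exact Or.inr (Or.inl (e _ hg))
    · exact Or.inr (Or.inr (Or.inl (e _ hg)))
    · exact Or.inr (Or.inr (Or.inr (e _ hg)))
  by_cases hw0 : PadicInt.toZMod W = 0
  · exfalso
    by_cases hx0 : PadicInt.toZMod X = 0
    · have hs := h.map (PadicInt.toZMod (p := l))
      rw [hw0, hx0] at hs
      obtain ⟨hy0, hz0⟩ := coreC hl hT.hi1 hT.hi5 hj6 hs
      rcases h1 with rfl | rfl | rfl | rfl <;> simp_all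
    · have hXu := hu X hx0
      obtain ⟨w', rfl⟩ := hXu.dvd (a := W)
      obtain ⟨y', rfl⟩ := hXu.dvd (a := Y)
      obtain ⟨z', rfl⟩ := hXu.dvd (a := Z)
      nth_rewrite 2 [← mul_one X] at h
      have h := Sys.unsmul hX h
      refine coreB hT hc (right_ne_zero_of_mul hW) ?_ h
      rw [map_mul] at hw0
      exact (mul_eq_zero.1 hw0).resolve_left hx0
  · have hWu := hu W hw0
    obtain ⟨x', rfl⟩ := hWu.dvd (a := X)
    obtain ⟨y', rfl⟩ := hWu.dvd (a := Y)
    obtain ⟨z', rfl⟩ := hWu.dvd (a := Z)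
    nth_rewrite 1 [← mul_one W] at h
    have h := Sys.unsmul hW h
    rcases coreA hT hc hij hj6 hk6 (right_ne_zero_of_mul hX) (right_ne_zero_of_mul hY)
      (right_ne_zero_of_mul hZ) h with ⟨a, b⟩ | ⟨rfl, rfl, rfl⟩ | ⟨rfl, rfl, rfl⟩
    · left
      exact ⟨by linear_combination g * W * a, by linear_combination (g*W)^3 * b⟩
    · right; left
      refine ⟨?_, ?_, ?_⟩ <;> ring
    · right; right
      refine ⟨?_, ?_, ?_⟩ <;> ring

end LocalMain

section Assembly

/-- all tables: prime, prime minus one, index of the first condition, table -/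
def entries : List (ℕ × ℕ × ℕ × List (ℕ × List ℕ)) :=
  [(11, 10, 1, tab11_1), (11, 10, 2, tab11_2), (11, 10, 3, tab11_3), (11, 10, 4, tab11_4), (11, 10, 5, tab11_5), (13, 12, 1, tab13_1), (13, 12, 2, tab13_2), (13, 12, 3, tab13_3), (13, 12, 4, tab13_4), (13, 12, 5, tab13_5), (17, 16, 2, tab17_2), (17, 16, 3, tab17_3), (17, 16, 4, tab17_4), (17, 16, 5, tab17_5), (19, 18, 1, tab19_1), (19, 18, 2, tab19_2), (19, 18, 3, tab19_3), (19, 18, 4, tab19_4), (23, 22, 1, tab23_1), (23, 22, 5, tab23_5), (29, 28, 1, tab29_1), (31, 30, 2, tab31_2), (37, 36, 2, tab37_2), (61, 60, 1, tab61_1), (71, 70, 5, tab71_5), (83, 82, 2, tab83_2), (113, 112, 1, tab113_1)]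

def EOK (e : ℕ × ℕ × ℕ × List (ℕ × List ℕ)) : Prop :=
  e.1.Prime ∧ e.2.1 + 1 = e.1 ∧ 7 < e.1 ∧ chk e.1 e.2.1 e.2.2.1 e.2.2.2 = true

theorem entries_ok : ∀ e ∈ entries, EOK e := by
  unfold entries
  simp only [List.forall_mem_cons]
  refine ⟨?_, ?_, ?_, ?_, ?_, ?_, ?_, ?_, ?_, ?_, ?_, ?_, ?_, ?_, ?_, ?_, ?_, ?_, ?_, ?_, ?_, ?_, ?_, ?_, ?_, ?_, ?_, fun e he => by simp at he⟩
  · exact ⟨by norm_num, rfl, by norm_num, ok11_1⟩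
  · exact ⟨by norm_num, rfl, by norm_num, ok11_2⟩
  · exact ⟨by norm_num, rfl, by norm_num, ok11_3⟩
  · exact ⟨by norm_num, rfl, by norm_num, ok11_4⟩
  · exact ⟨by norm_num, rfl, by norm_num, ok11_5⟩
  · exact ⟨by norm_num, rfl, by norm_num, ok13_1⟩
  · exact ⟨by norm_num, rfl, by norm_num, ok13_2⟩
  · exact ⟨by norm_num, rfl, by norm_num, ok13_3⟩
  · exact ⟨by norm_num, rfl, by norm_num, ok13_4⟩
  · exact ⟨by norm_num, rfl, by norm_num, ok13_5⟩
  · exact ⟨by norm_num, rfl, by norm_num, ok17_2⟩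
  · exact ⟨by norm_num, rfl, by norm_num, ok17_3⟩
  · exact ⟨by norm_num, rfl, by norm_num, ok17_4⟩
  · exact ⟨by norm_num, rfl, by norm_num, ok17_5⟩
  · exact ⟨by norm_num, rfl, by norm_num, ok19_1⟩
  · exact ⟨by norm_num, rfl, by norm_num, ok19_2⟩
  · exact ⟨by norm_num, rfl, by norm_num, ok19_3⟩
  · exact ⟨by norm_num, rfl, by norm_num, ok19_4⟩
  · exact ⟨by norm_num, rfl, by norm_num, ok23_1⟩
  · exact ⟨by norm_num, rfl, by norm_num, ok23_5⟩
  · exact ⟨by norm_num, rfl, by norm_num, ok29_1⟩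
  · exact ⟨by norm_num, rfl, by norm_num, ok31_2⟩
  · exact ⟨by norm_num, rfl, by norm_num, ok37_2⟩
  · exact ⟨by norm_num, rfl, by norm_num, ok61_1⟩
  · exact ⟨by norm_num, rfl, by norm_num, ok71_5⟩
  · exact ⟨by norm_num, rfl, by norm_num, ok83_2⟩
  · exact ⟨by norm_num, rfl, by norm_num, ok113_1⟩

noncomputable def covers (i j k : ℕ) : Bool :=
  Nat.beq i 0 || (Nat.beq i 1 && Nat.beq j 1) ||
    entries.any fun e => decide (e.2.2.1 = i) &&
      e.2.2.2.any fun p => decide (p.1 = j) && decide (k ∈ p.2)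

theorem covers_all : (allLt 6 fun i => allLt 7 fun j => allLt 7 fun k => covers i j k) = true := by
  decide +kernel

theorem entries_cover (i : ℕ) (hi : i < 6) (j : ℕ) (hj : j < 7) (k : ℕ) (hk : k < 7) (h1 : 1 ≤ i)
    (h2 : ¬ (i = 1 ∧ j = 1)) :
    ∃ e ∈ entries, e.2.2.1 = i ∧ ∃ p ∈ e.2.2.2, p.1 = j ∧ k ∈ p.2 := by
  have h := allLt_spec (allLt_spec (allLt_spec covers_all i hi) j hj) k hk
  unfold covers at h
  simp only [Bool.or_eq_true, List.any_eq_true, Bool.and_eq_true, decide_eq_true_eq,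
    Nat.beq_eq] at h
  rcases h with (h | h) | h
  · omega
  · exact absurd h h2
  · exact h

theorem glob {i j k : ℕ} (hi1 : 1 ≤ i) (hi5 : i ≤ 5) (hij : ¬ (i = 1 ∧ j = 1)) (hj6 : j ≤ 6)
    (hk6 : k ≤ 6) {a b c : ℚ} (ha : a ≠ 0) (hb : b ≠ 0) (hc : c ≠ 0) (h : Sys i j k 1 a b c) :
    (1 + c = 0 ∧ a^3+b^3 = 0) ∨ (a = -1 ∧ b = 1 ∧ c = 1) ∨ (a = 1 ∧ b = -1 ∧ c = 1) := by
  obtain ⟨⟨l, m, i', T⟩, he, rfl, ⟨j', ks⟩, hp, rfl, hk⟩ :=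
    entries_cover i (by omega) j (by omega) k (by omega) hi1 hij
  obtain ⟨hpr, hm, hl, hchk⟩ := entries_ok _ he
  dsimp only at *
  have : Fact l.Prime := ⟨hpr⟩
  have hT : Tab l m i' j' k T := by
    refine ⟨?_, hl, hi1, hi5, ks, hp, hk⟩
    have : ((m + 1 : ℕ) : ZMod l) = 0 := by rw [hm]; simp
    push_cast at this
    linear_combination this
  obtain ⟨w, x, y, z, hw, hx, hy, hz⟩ : ∃ w x y z : ℤ, w ≠ 0 ∧ (x : ℚ) = w * a ∧ (y : ℚ) = w * b ∧
      (z : ℚ) = w * c := by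
    refine ⟨a.den * b.den * c.den, a.num * b.den * c.den, a.den * b.num * c.den,
      a.den * b.den * c.num, ?_, ?_, ?_, ?_⟩
    · have := a.den_nz; have := b.den_nz; have := c.den_nz; positivity
    · have := Rat.mul_den_eq_num a
      push_cast; rw [← this]; ring
    · have := Rat.mul_den_eq_num b
      push_cast; rw [← this]; ring
    · have := Rat.mul_den_eq_num c
      push_cast; rw [← this]; ring
  have hwQ : (w : ℚ) ≠ 0 := by exact_mod_cast hw
  have hx0 : x ≠ 0 := by
    have : (x : ℚ) ≠ 0 := by rw [hx]; exact mul_ne_zero hwQ ha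
    exact_mod_cast this
  have hy0 : y ≠ 0 := by
    have : (y : ℚ) ≠ 0 := by rw [hy]; exact mul_ne_zero hwQ hb
    exact_mod_cast this
  have hz0 : z ≠ 0 := by
    have : (z : ℚ) ≠ 0 := by rw [hz]; exact mul_ne_zero hwQ hc
    exact_mod_cast this
  have h := h.smul (w : ℚ)
  rw [mul_one, ← hx, ← hy, ← hz] at h
  have h : Sys i' j' k w x y z := Sys.of_map (Int.castRingHom ℚ) Int.cast_injective h
  have h := h.map (Int.castRingHom ℤ_[l])
  simp only [eq_intCast] at h
  have h := local_main hT hchk hij hj6 hk6 (Int.cast_ne_zero.2 hw) (Int.cast_ne_zero.2 hx0)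
    (Int.cast_ne_zero.2 hy0) (Int.cast_ne_zero.2 hz0) h
  rcases h with ⟨h1, h2⟩ | ⟨h1, h2, h3⟩ | ⟨h1, h2, h3⟩
  · left
    have h1 : w + z = 0 := by exact_mod_cast h1
    have h2 : x^3 + y^3 = 0 := by exact_mod_cast h2
    have h1 : (w : ℚ) + z = 0 := by exact_mod_cast h1
    have h2 : (x : ℚ)^3 + (y : ℚ)^3 = 0 := by exact_mod_cast h2
    rw [hz] at h1
    rw [hx, hy] at h2
    constructor
    · apply mul_left_cancel₀ hwQ; linear_combination h1
    · apply mul_left_cancel₀ (pow_ne_zero 3 hwQ); linear_combination h2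
  · right; left
    have h1 : x = -w := by exact_mod_cast h1
    have h2 : y = w := by exact_mod_cast h2
    have h3 : z = w := by exact_mod_cast h3
    subst h1 h2 h3
    refine ⟨?_, ?_, ?_⟩ <;> apply mul_left_cancel₀ hwQ
    · rw [← hx]; push_cast; ring
    · rw [← hy]; ring
    · rw [← hz]; ring
  · right; right
    have h1 : x = w := by exact_mod_cast h1
    have h2 : y = -w := by exact_mod_cast h2
    have h3 : z = w := by exact_mod_cast h3
    subst h1 h2 h3
    refine ⟨?_, ?_, ?_⟩ <;> apply mul_left_cancel₀ hwQ
    · rw [← hx]; ring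
    · rw [← hy]; push_cast; ring
    · rw [← hz]; ring

theorem cube_neg {a b : ℚ} (h : a^3 + b^3 = 0) : b = -a := by
  have : b^3 = (-a)^3 := by linear_combination h
  exact (Odd.strictMono_pow (by decide : Odd 3)).injective this

theorem condT_EE {w x y z : ℚ} (h : condT w x y z) : ∃ j ≤ 6, EE j w x y z = 0 := by
  rcases h with h | h | h | h | h | h
  · rcases mul_eq_zero.1 (show w * (w + z) = 0 by linear_combination h) with h | h
    · exact ⟨0, by norm_num, by simp [EE, h]⟩
    · exact ⟨1, by norm_num, by simp [EE, al, be, h]⟩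
  · exact ⟨2, by norm_num, by simp [EE, al, be]; linear_combination h⟩
  · exact ⟨3, by norm_num, by simp [EE, al, be]; linear_combination h⟩
  · exact ⟨4, by norm_num, by simp [EE, al, be]; linear_combination h⟩
  · exact ⟨5, by norm_num, by simp [EE, al, be]; linear_combination h⟩
  · exact ⟨6, by norm_num, by simp [EE, al, be]; linear_combination h⟩

theorem condR_EE {a b c : ℚ} (h : condR a b c) : ∃ i, 1 ≤ i ∧ i ≤ 5 ∧ EE i 1 a b c = 0 := by
  rcases h with h | h | h | h | h
  · exact ⟨1, by norm_num, by norm_num, by simp [EE, al, be]; linear_combination h⟩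
  · exact ⟨2, by norm_num, by norm_num, by simp [EE, al, be]; linear_combination h⟩
  · exact ⟨3, by norm_num, by norm_num, by simp [EE, al, be]; linear_combination h⟩
  · exact ⟨4, by norm_num, by norm_num, by simp [EE, al, be]; linear_combination h⟩
  · exact ⟨5, by norm_num, by norm_num, by simp [EE, al, be]; linear_combination h⟩

end Assembly

theorem stmt_18 (a b c : ℚ) (habc : a * b * c ≠ 0)
    (hR : condR a b c)
    (hT : condT (Ghat (1, a, b, c)).1 (Ghat (1, a, b, c)).2.1
      (Ghat (1, a, b, c)).2.2.1 (Ghat (1, a, b, c)).2.2.2)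
    (hT2 : condT (Ghat (Ghat (1, a, b, c))).1 (Ghat (Ghat (1, a, b, c))).2.1
      (Ghat (Ghat (1, a, b, c))).2.2.1 (Ghat (Ghat (1, a, b, c))).2.2.2) :
    (a, b, c) = (-1, 1, 1) ∨ (a, b, c) = (1, -1, 1) ∨ (b = -a ∧ c = -1) := by
  have ha : a ≠ 0 := by rintro rfl; simp at habc
  have hb : b ≠ 0 := by rintro rfl; simp at habc
  have hc : c ≠ 0 := by rintro rfl; simp at habc
  obtain ⟨i, hi1, hi5, hi⟩ := condR_EE hR
  obtain ⟨j, hj6, hj⟩ := condT_EE hT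
  obtain ⟨k, hk6, hk⟩ := condT_EE hT2
  have hS : Sys i j k 1 a b c := ⟨hi, hj, hk⟩
  by_cases hij : i = 1 ∧ j = 1
  · obtain ⟨rfl, rfl⟩ := hij
    right; right
    have hc1 : c = -1 := by
      simp [EE, al, be] at hi; linear_combination hi
    subst hc1
    refine ⟨cube_neg ?_, rfl⟩
    simp [EE, al, be, Ghat] at hj
    linear_combination hj / 3
  · rcases glob hi1 hi5 hij hj6 hk6 ha hb hc hS with ⟨h1, h2⟩ | ⟨h1, h2, h3⟩ | ⟨h1, h2, h3⟩
    · exact Or.inr (Or.inr ⟨cube_neg h2, by linear_combination h1⟩)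
    · left; rw [h1, h2, h3]
    · right; left; rw [h1, h2, h3]
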